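/- arXiv:1808.10101 — 9 statements merged into one kernel-verified Lean document; each statement's English description precedes it below -/
import Mathlib

section
/- Gaussian mechanism differential privacy (Theorem 1, per-coordinate form). Let ε ∈ (0,1], δ ∈ (0, 1/100], Δ > 0, and set σ = Δ·√(2·ln(1.25/δ))/ε. Then for any real numbers x, y with |x − y| ≤ Δ and every measurable set O ⊆ ℝ, the Gaussian measures with means x and y and variance σ² satisfy (gaussianReal x σ²)(O) ≤ e^ε · (gaussianReal y σ²)(O) + δ. -/
open ProbabilityTheory MeasureTheory

/-!
For `0 ≤ x - y ≤ Δ` the log-likelihood ratio of `N(x, v)` to `N(y, v)` is affine and nondecreasing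
in the sample, so it exceeds `ε` at most on the half-line `(x + θ, ∞)` with `θ = vε/Δ - Δ/2`;
the mass of that half-line is charged to `δ`. When `θ ≥ 0` this mass is at most
`exp (-θ² / (2v)) / 2`, and the factor `1 / 2`, which a Chernoff bound would miss, is what makes
the constant `1.25` sufficient.

For `δ` close to `1` the threshold `θ` can be negative. Then the half-line `(x, ∞)` gives the
guarantee `(k, 1 / 2)` with `k = Δ² / (2v) > ε`, and averaging it with the trivial bound `1` trades
`k` for `ε`.
-/

section ApproxMaxDivergence

variable {α β : Type*} [MeasurableSpace α] [MeasurableSpace β] {μ ν : Measure α} {ε δ : ℝ}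

/-- The `δ`-approximate max-divergence of `μ` from `ν` is at most `ε`. A mechanism is
`(ε, δ)`-differentially private when its output laws on any two neighbouring inputs, taken in
either order, are in this relation. -/
def ApproxMaxDivergenceLE (μ ν : Measure α) (ε δ : ℝ) : Prop :=
  ∀ s, MeasurableSet s → μ s ≤ ENNReal.ofReal (Real.exp ε) * ν s + ENNReal.ofReal δ

namespace ApproxMaxDivergenceLE

theorem mono_right {δ' : ℝ} (h : ApproxMaxDivergenceLE μ ν ε δ) (hδ : δ ≤ δ') :
    ApproxMaxDivergenceLE μ ν ε δ' := fun s hs =>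
  (h s hs).trans (by gcongr)

theorem map {f : α → β} (h : ApproxMaxDivergenceLE μ ν ε δ) (hf : Measurable f) :
    ApproxMaxDivergenceLE (μ.map f) (ν.map f) ε δ := fun s hs => by
  simpa only [Measure.map_apply hf hs] using h _ (hf hs)

theorem of_restrict_compl_le {B : Set α} (hB : MeasurableSet B)
    (hle : μ.restrict Bᶜ ≤ ENNReal.ofReal (Real.exp ε) • ν) (hδ : μ B ≤ ENNReal.ofReal δ) :
    ApproxMaxDivergenceLE μ ν ε δ := fun s _ =>
  calc μ s = μ (s ∩ B) + μ.restrict Bᶜ s := by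
        rw [Measure.restrict_apply' hB.compl, ← Set.sdiff_eq, measure_inter_add_sdiff s hB]
    _ ≤ ENNReal.ofReal δ + ENNReal.ofReal (Real.exp ε) * ν s :=
        add_le_add ((measure_mono Set.inter_subset_right).trans hδ) (hle s)
    _ = ENNReal.ofReal (Real.exp ε) * ν s + ENNReal.ofReal δ := add_comm _ _

theorem of_exponent_le [IsProbabilityMeasure μ] {k : ℝ} (h : ApproxMaxDivergenceLE μ ν k δ)
    (hδ : 0 ≤ δ) (hε : ε ≤ k) :
    ApproxMaxDivergenceLE μ ν ε (1 - Real.exp (ε - k) * (1 - δ)) := fun s hs => by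
  set w := Real.exp (ε - k) with hw
  have hw0 : 0 ≤ w := (Real.exp_pos _).le
  have hw1 : 0 ≤ 1 - w := sub_nonneg.2 (Real.exp_le_one_iff.2 (sub_nonpos.2 hε))
  calc μ s = ENNReal.ofReal w * μ s + ENNReal.ofReal (1 - w) * μ s := by
        rw [← add_mul, ← ENNReal.ofReal_add hw0 hw1, add_sub_cancel, ENNReal.ofReal_one, one_mul]
    _ ≤ ENNReal.ofReal w * (ENNReal.ofReal (Real.exp k) * ν s + ENNReal.ofReal δ)
          + ENNReal.ofReal (1 - w) * 1 := by
        gcongr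
        exacts [h s hs, prob_le_one]
    _ = ENNReal.ofReal (w * Real.exp k) * ν s + ENNReal.ofReal (w * δ + (1 - w)) := by
        rw [mul_add, ← mul_assoc, ← ENNReal.ofReal_mul hw0, ← ENNReal.ofReal_mul hw0, mul_one,
          add_assoc, ← ENNReal.ofReal_add (mul_nonneg hw0 hδ) hw1]
    _ = ENNReal.ofReal (Real.exp ε) * ν s + ENNReal.ofReal (1 - w * (1 - δ)) := by
        rw [hw, ← Real.exp_add, sub_add_cancel]
        ring_nf

end ApproxMaxDivergenceLE

end ApproxMaxDivergence

section Gaussian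

variable {v : NNReal}

theorem gaussianPDFReal_eq_exp_mul (x y : ℝ) (v : NNReal) (t : ℝ) :
    gaussianPDFReal x v t =
      Real.exp ((x - y) * (2 * t - x - y) / (2 * v)) * gaussianPDFReal y v t := by
  rw [gaussianPDFReal, gaussianPDFReal, mul_left_comm, ← Real.exp_add]
  ring_nf

theorem gaussianReal_restrict_le_smul (hv : v ≠ 0) {x y k : ℝ} {S : Set ℝ} (hS : MeasurableSet S)
    (hk : ∀ t ∈ S, (x - y) * (2 * t - x - y) ≤ k * (2 * v)) :
    (gaussianReal x v).restrict S ≤ ENNReal.ofReal (Real.exp k) • gaussianReal y v := by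
  have hv0 : (0 : ℝ) < 2 * v := by positivity
  have hpdf : ∀ t ∈ S, gaussianPDF x v t ≤ ENNReal.ofReal (Real.exp k) * gaussianPDF y v t := by
    intro t ht
    rw [gaussianPDF, gaussianPDF, ← ENNReal.ofReal_mul (Real.exp_pos k).le,
      gaussianPDFReal_eq_exp_mul x y]
    have hloss : (x - y) * (2 * t - x - y) / (2 * v) ≤ k := (div_le_iff₀ hv0).2 (hk t ht)
    gcongr
    exact gaussianPDFReal_nonneg y v t
  calc (gaussianReal x v).restrict S
      = (volume.restrict S).withDensity (gaussianPDF x v) := by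
        rw [gaussianReal_of_var_ne_zero x hv, restrict_withDensity hS]
    _ ≤ (volume.restrict S).withDensity (ENNReal.ofReal (Real.exp k) • gaussianPDF y v) :=
        withDensity_mono (ae_restrict_of_forall_mem hS hpdf)
    _ = ENNReal.ofReal (Real.exp k) • (gaussianReal y v).restrict S := by
        rw [withDensity_smul _ (measurable_gaussianPDF y v), gaussianReal_of_var_ne_zero y hv,
          restrict_withDensity hS]
    _ ≤ ENNReal.ofReal (Real.exp k) • gaussianReal y v := by
        gcongr
        exact Measure.restrict_le_self

theorem gaussianReal_Ioi_mean_le (m : ℝ) (v : NNReal) :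
    gaussianReal m v (Set.Ioi m) ≤ 2⁻¹ := by
  have hsymm : gaussianReal m v (Set.Iio m) = gaussianReal m v (Set.Ioi m) := by
    have hreflect : (gaussianReal m v).map (2 * m - ·) = gaussianReal m v := by
      rw [gaussianReal_map_const_sub, two_mul, add_sub_cancel_right]
    conv_lhs => rw [← hreflect, Measure.map_apply (by fun_prop) measurableSet_Iio,
      Set.preimage_const_sub_Iio, two_mul, add_sub_cancel_right]
  rw [ENNReal.le_inv_iff_mul_le, mul_two]
  calc gaussianReal m v (Set.Ioi m) + gaussianReal m v (Set.Ioi m)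
      = gaussianReal m v (Set.Iio m ∪ Set.Ioi m) := by
        rw [measure_union (Set.Iio_disjoint_Ioi_same) measurableSet_Ioi, hsymm]
    _ ≤ 1 := prob_le_one

theorem gaussianReal_Ioi_add_le (m : ℝ) (hv : v ≠ 0) {θ : ℝ} (hθ : 0 ≤ θ) :
    gaussianReal m v (Set.Ioi (m + θ)) ≤
      ENNReal.ofReal (Real.exp (-θ ^ 2 / (2 * v)) / 2) := by
  have hshift :
      gaussianReal m v (Set.Ioi (m + θ)) = gaussianReal (m - θ) v (Set.Ioi m) := by
    rw [← gaussianReal_map_sub_const θ, Measure.map_apply (by fun_prop) measurableSet_Ioi,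
      Set.preimage_sub_const_Ioi]
  have hratio : (gaussianReal (m - θ) v).restrict (Set.Ioi m) ≤
      ENNReal.ofReal (Real.exp (-θ ^ 2 / (2 * v))) • gaussianReal m v := by
    refine gaussianReal_restrict_le_smul hv measurableSet_Ioi fun t ht => ?_
    rw [div_mul_cancel₀ _ (by positivity)]
    nlinarith only [mul_nonneg hθ (sub_nonneg.2 (Set.mem_Ioi.1 ht).le)]
  calc gaussianReal m v (Set.Ioi (m + θ))
      = (gaussianReal (m - θ) v).restrict (Set.Ioi m) (Set.Ioi m) := by
        rw [hshift, Measure.restrict_apply_self]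
    _ ≤ ENNReal.ofReal (Real.exp (-θ ^ 2 / (2 * v))) * gaussianReal m v (Set.Ioi m) :=
        hratio (Set.Ioi m)
    _ ≤ ENNReal.ofReal (Real.exp (-θ ^ 2 / (2 * v))) * 2⁻¹ := by
        gcongr
        exact gaussianReal_Ioi_mean_le m v
    _ = ENNReal.ofReal (Real.exp (-θ ^ 2 / (2 * v)) / 2) := by
        rw [ENNReal.ofReal_div_of_pos two_pos, ENNReal.ofReal_ofNat,
          ENNReal.div_eq_inv_mul, mul_comm]

theorem approxMaxDivergenceLE_gaussianReal (hv : v ≠ 0) {x y Δ θ ε : ℝ} (hxy : |x - y| ≤ Δ)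
    (hθ : 0 ≤ θ) (hε : Δ * (2 * θ + Δ) ≤ ε * (2 * v)) :
    ApproxMaxDivergenceLE (gaussianReal x v) (gaussianReal y v) ε
      (Real.exp (-θ ^ 2 / (2 * v)) / 2) := by
  wlog hle : y ≤ x generalizing x y
  · have hneg := this (x := -x) (y := -y) (by rwa [neg_sub_neg, abs_sub_comm]) (by linarith)
    simpa only [gaussianReal_map_neg, neg_neg] using hneg.map measurable_neg
  refine .of_restrict_compl_le measurableSet_Ioi
    (gaussianReal_restrict_le_smul hv measurableSet_Ioi.compl fun t ht => ?_)
    (gaussianReal_Ioi_add_le x hv hθ)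
  have ht : t ≤ x + θ := not_lt.1 ht
  have hd : 0 ≤ x - y := sub_nonneg.2 hle
  have hdΔ : x - y ≤ Δ := (le_abs_self _).trans hxy
  calc (x - y) * (2 * t - x - y) ≤ (x - y) * (2 * θ + (x - y)) := by
        gcongr
        linarith
    _ ≤ Δ * (2 * θ + Δ) := by
        gcongr
        exact hd.trans hdΔ
    _ ≤ ε * (2 * v) := hε

theorem approxMaxDivergenceLE_gaussianReal_of_sq_le (hv : v ≠ 0) {x y Δ ε L : ℝ} (hΔ : 0 < Δ)
    (hxy : |x - y| ≤ Δ) (hΔε : Δ ^ 2 ≤ 2 * v * ε) (hL : 2 * L * Δ ^ 2 ≤ v * ε ^ 2) :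
    ApproxMaxDivergenceLE (gaussianReal x v) (gaussianReal y v) ε (Real.exp (ε / 2 - L) / 2) := by
  set θ := v * ε / Δ - Δ / 2 with hθ
  have : (0 : ℝ) < v := by positivity
  have hθ_eq : Δ * (2 * θ + Δ) = ε * (2 * v) := by
    rw [hθ]
    field_simp
    ring
  have hθ0 : 0 ≤ θ := by
    rw [hθ, sub_nonneg, div_le_div_iff₀ two_pos hΔ]
    linarith
  refine (approxMaxDivergenceLE_gaussianReal hv hxy hθ0 hθ_eq.le).mono_right ?_
  have hexponent : -θ ^ 2 / (2 * v) ≤ ε / 2 - L :=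
    calc -θ ^ 2 / (2 * v) = ε / 2 - v * ε ^ 2 / (2 * Δ ^ 2) - Δ ^ 2 / (8 * v) := by
          rw [hθ]
          field_simp
          ring
      _ ≤ ε / 2 - v * ε ^ 2 / (2 * Δ ^ 2) := sub_le_self _ (by positivity)
      _ ≤ ε / 2 - L := by
          gcongr
          rw [le_div_iff₀ (by positivity)]
          linarith
  gcongr

theorem approxMaxDivergenceLE_gaussianReal_of_le_sq (hv : v ≠ 0) {x y Δ ε : ℝ}
    (hxy : |x - y| ≤ Δ) (hΔε : 2 * v * ε ≤ Δ ^ 2) :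
    ApproxMaxDivergenceLE (gaussianReal x v) (gaussianReal y v) ε
      (1 - Real.exp (ε - Δ ^ 2 / (2 * v)) / 2) := by
  have : (0 : ℝ) < v := by positivity
  have hhalf : ApproxMaxDivergenceLE (gaussianReal x v) (gaussianReal y v)
      (Δ ^ 2 / (2 * v)) (1 / 2) := by
    simpa using approxMaxDivergenceLE_gaussianReal hv hxy le_rfl
      (show Δ * (2 * 0 + Δ) ≤ Δ ^ 2 / (2 * v) * (2 * v) by field_simp; linarith)
  have hε : ε ≤ Δ ^ 2 / (2 * v) := by
    rw [le_div_iff₀ (by positivity)]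
    linarith
  exact (hhalf.of_exponent_le (by norm_num) hε).mono_right (by linarith)

end Gaussian

section Calibration

variable {ε δ : ℝ}

theorem exp_neg_log_five_fourths_div (hδ : 0 < δ) :
    Real.exp (-Real.log (1.25 / δ)) = 4 / 5 * δ := by
  rw [Real.exp_neg, Real.exp_log (by positivity), inv_div, div_eq_inv_mul]
  norm_num

theorem exp_half_sub_log_div_two_le (hε1 : ε ≤ 1) (hδ : 0 < δ) :
    Real.exp (ε / 2 - Real.log (1.25 / δ)) / 2 ≤ δ := by
  have hexp : Real.exp (ε / 2) ≤ 2 :=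
    calc Real.exp (ε / 2) ≤ Real.exp (1 / 2) := by gcongr
      _ ≤ 1 / (1 - 1 / 2) := Real.exp_bound_div_one_sub_of_interval (by norm_num) (by norm_num)
      _ = 2 := by norm_num
  rw [sub_eq_add_neg, Real.exp_add, exp_neg_log_five_fourths_div hδ]
  calc Real.exp (ε / 2) * (4 / 5 * δ) / 2 ≤ 2 * (4 / 5 * δ) / 2 := by gcongr
    _ ≤ δ := by linarith

theorem one_sub_exp_div_two_le {v Δ : ℝ} (hv : 0 < v) (hε : 0 < ε) (hε1 : ε ≤ 1) (hδ : 0 < δ)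
    (hδ1 : δ ≤ 1) (hΔε : 2 * v * ε ≤ Δ ^ 2)
    (hL : 2 * Real.log (1.25 / δ) * Δ ^ 2 ≤ v * ε ^ 2) :
    1 - Real.exp (ε - Δ ^ 2 / (2 * v)) / 2 ≤ δ := by
  set L := Real.log (1.25 / δ)
  have hL_ge : 1 / 5 ≤ L :=
    calc (1 : ℝ) / 5 ≤ 1 - 4 / 5 * δ := by linarith
      _ = 1 - (1.25 / δ)⁻¹ := by
          rw [inv_div]
          ring
      _ ≤ L := Real.one_sub_inv_le_log_of_pos (by positivity)
  have hL_le : 4 * L ≤ ε := by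
    refine le_of_mul_le_mul_right ?_ (mul_pos hv hε)
    calc 4 * L * (v * ε) = 2 * L * (2 * v * ε) := by ring
      _ ≤ 2 * L * Δ ^ 2 := by gcongr
      _ ≤ v * ε ^ 2 := hL
      _ = ε * (v * ε) := by ring
  have hδ_ge : 15 / 16 ≤ δ := by
    have hexp_neg := Real.one_sub_le_exp_neg L
    rw [exp_neg_log_five_fourths_div hδ] at hexp_neg
    linarith
  have hexponent : -(1 / 4) ≤ ε - Δ ^ 2 / (2 * v) := by
    have hk : Δ ^ 2 / (2 * v) ≤ 5 / 4 * ε ^ 2 := by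
      rw [div_le_iff₀ (by positivity)]
      linarith [mul_le_mul_of_nonneg_right hL_ge (sq_nonneg Δ)]
    linarith [mul_nonneg (sub_nonneg.2 hε1) (by positivity : 0 ≤ 5 / 4 * ε + 1 / 4)]
  linarith [Real.add_one_le_exp (ε - Δ ^ 2 / (2 * v))]

theorem two_mul_mul_sq_le_of_mul_sqrt_div_le {Δ L σ : ℝ} (hε : 0 < ε) (hΔ : 0 ≤ Δ) (hL : 0 ≤ L)
    (hσ : Δ * √(2 * L) / ε ≤ σ) : 2 * L * Δ ^ 2 ≤ σ ^ 2 * ε ^ 2 :=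
  calc 2 * L * Δ ^ 2 = (Δ * √(2 * L)) ^ 2 := by
        rw [mul_pow, Real.sq_sqrt (by positivity), mul_comm]
    _ ≤ (σ * ε) ^ 2 := pow_le_pow_left₀ (by positivity) ((div_le_iff₀ hε).1 hσ) 2
    _ = σ ^ 2 * ε ^ 2 := mul_pow _ _ _

end Calibration

theorem gaussian_mechanism_dp_general {ε δ Δ σ x y : ℝ} (hε : 0 < ε) (hε1 : ε ≤ 1) (hδ : 0 < δ)
    (hδ1 : δ ≤ 1) (hΔ : 0 < Δ) (hσ : Δ * √(2 * Real.log (1.25 / δ)) / ε ≤ σ)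
    (hxy : |x - y| ≤ Δ) :
    ApproxMaxDivergenceLE (gaussianReal x ⟨σ ^ 2, sq_nonneg σ⟩)
      (gaussianReal y ⟨σ ^ 2, sq_nonneg σ⟩) ε δ := by
  have hlog : 0 < Real.log (1.25 / δ) :=
    Real.log_pos ((one_lt_div hδ).2 (by linarith))
  have hσ0 : 0 < σ := lt_of_lt_of_le
    (div_pos (mul_pos hΔ (Real.sqrt_pos.2 (mul_pos two_pos hlog))) hε) hσ
  have hv : (⟨σ ^ 2, sq_nonneg σ⟩ : NNReal) ≠ 0 :=
    fun h => (pow_pos hσ0 2).ne' (congrArg NNReal.toReal h)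
  have hL := two_mul_mul_sq_le_of_mul_sqrt_div_le hε hΔ.le hlog.le hσ
  rcases le_total (Δ ^ 2) (2 * σ ^ 2 * ε) with hΔε | hΔε
  · exact (approxMaxDivergenceLE_gaussianReal_of_sq_le hv hΔ hxy hΔε hL).mono_right
      (exp_half_sub_log_div_two_le hε1 hδ)
  · exact (approxMaxDivergenceLE_gaussianReal_of_le_sq hv hxy hΔε).mono_right
      (one_sub_exp_div_two_le (pow_pos hσ0 2) hε hε1 hδ hδ1 hΔε hL)

/-- Gaussian mechanism differential privacy (Theorem 1, per-coordinate form). -/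
theorem gaussian_mechanism_dp
    (ε δ Δ : ℝ) (hε : 0 < ε) (hε1 : ε ≤ 1) (hδ : 0 < δ) (hδ1 : δ ≤ 1 / 100)
    (hΔ : 0 < Δ) (σ : ℝ)
    (hσ : σ = Δ * Real.sqrt (2 * Real.log (1.25 / δ)) / ε)
    (x y : ℝ) (hxy : |x - y| ≤ Δ) (O : Set ℝ) (hO : MeasurableSet O) :
    gaussianReal x ⟨σ ^ 2, sq_nonneg σ⟩ O ≤
      ENNReal.ofReal (Real.exp ε) * gaussianReal y ⟨σ ^ 2, sq_nonneg σ⟩ O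
        + ENNReal.ofReal δ :=
  gaussian_mechanism_dp_general hε hε1 hδ (by linarith) hΔ hσ.ge hxy O hO
end

section
/- Log-moment of the Gaussian privacy loss (computation in the proof of the composition theorem). Let σ > 0 and Δ ∈ ℝ, and let μ₀ and μ₁ denote the densities of the Gaussian distributions N(0, σ²) and N(Δ, σ²) on ℝ. Then for every real τ ≥ 0: ∫ (μ₀(z)/μ₁(z))^τ d(gaussianReal 0 σ²)(z) = exp(τ(τ+1)Δ²/(2σ²)), and likewise ∫ (μ₁(z)/μ₀(z))^τ d(gaussianReal Δ σ²)(z) = exp(τ(τ+1)Δ²/(2σ²)). In particular, if σ = Δ·√(2·ln(1.25/δ))/ε with ε, δ, Δ > 0, both integrals equal exp(τ(τ+1)ε²/(4·ln(1.25/δ))). -/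
open ProbabilityTheory MeasureTheory

/- The log-likelihood ratio of two Gaussians with the same variance is affine in the observation,
so each moment of the likelihood ratio is a value of the Gaussian moment generating function. -/

lemma gaussianPDFReal_div_gaussianPDFReal (a b : ℝ) {v : NNReal} (hv : v ≠ 0) (z : ℝ) :
    gaussianPDFReal a v z / gaussianPDFReal b v z
      = Real.exp ((a - b) / v * z + (b ^ 2 - a ^ 2) / (2 * v)) := by
  have hnorm : (√(2 * Real.pi * v))⁻¹ ≠ 0 := by positivity
  rw [gaussianPDFReal, gaussianPDFReal, mul_div_mul_left _ _ hnorm, ← Real.exp_sub]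
  congr 1
  field_simp
  ring

lemma integral_exp_mul_gaussianReal (m : ℝ) (v : NNReal) (t : ℝ) :
    ∫ z, Real.exp (t * z) ∂(gaussianReal m v) = Real.exp (m * t + v * t ^ 2 / 2) :=
  congrFun mgf_id_gaussianReal t

lemma integral_gaussianPDFReal_div_rpow (a b : ℝ) {v : NNReal} (hv : v ≠ 0) (τ : ℝ) :
    ∫ z, (gaussianPDFReal a v z / gaussianPDFReal b v z) ^ τ ∂(gaussianReal a v)
      = Real.exp (τ * (τ + 1) * (a - b) ^ 2 / (2 * v)) := by
  have hratio (z : ℝ) : (gaussianPDFReal a v z / gaussianPDFReal b v z) ^ τ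
      = Real.exp (τ * (a - b) / v * z) * Real.exp (τ * (b ^ 2 - a ^ 2) / (2 * v)) := by
    rw [gaussianPDFReal_div_gaussianPDFReal a b hv, ← Real.exp_mul, ← Real.exp_add]
    congr 1
    ring
  simp only [hratio]
  rw [integral_mul_const, integral_exp_mul_gaussianReal, ← Real.exp_add]
  congr 1
  field_simp
  ring

lemma sq_div_two_mul_sq_of_eq_mul_sqrt_div {σ Δ ε L : ℝ} (hσ : σ ≠ 0)
    (h : σ = Δ * √(2 * L) / ε) : Δ ^ 2 / (2 * σ ^ 2) = ε ^ 2 / (4 * L) := by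
  subst h
  obtain ⟨⟨hΔ, hsqrt⟩, hε⟩ : (Δ ≠ 0 ∧ √(2 * L) ≠ 0) ∧ ε ≠ 0 := by
    simpa only [ne_eq, div_eq_zero_iff, mul_eq_zero, not_or] using hσ
  have hLpos : 0 < 2 * L := Real.sqrt_ne_zero'.mp hsqrt
  have hL : L ≠ 0 := (pos_of_mul_pos_right hLpos zero_le_two).ne'
  rw [div_pow, mul_pow, Real.sq_sqrt hLpos.le]
  field_simp
  ring

theorem gaussian_privacy_loss_log_moment_general (σ Δ : ℝ) (hσ : σ ≠ 0) (τ : ℝ) :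
    (∫ z, (gaussianPDFReal 0 (.mk (σ ^ 2) (sq_nonneg σ)) z /
            gaussianPDFReal Δ (.mk (σ ^ 2) (sq_nonneg σ)) z) ^ τ
        ∂(gaussianReal 0 (.mk (σ ^ 2) (sq_nonneg σ))))
      = Real.exp (τ * (τ + 1) * Δ ^ 2 / (2 * σ ^ 2)) ∧
    (∫ z, (gaussianPDFReal Δ (.mk (σ ^ 2) (sq_nonneg σ)) z /
            gaussianPDFReal 0 (.mk (σ ^ 2) (sq_nonneg σ)) z) ^ τ
        ∂(gaussianReal Δ (.mk (σ ^ 2) (sq_nonneg σ))))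
      = Real.exp (τ * (τ + 1) * Δ ^ 2 / (2 * σ ^ 2)) ∧
    (∀ ε L : ℝ, σ = Δ * √(2 * L) / ε →
      Real.exp (τ * (τ + 1) * Δ ^ 2 / (2 * σ ^ 2))
        = Real.exp (τ * (τ + 1) * ε ^ 2 / (4 * L))) := by
  have hvar : NNReal.mk (σ ^ 2) (sq_nonneg σ) ≠ 0 :=
    NNReal.coe_ne_zero.mp (pow_ne_zero 2 hσ)
  refine ⟨?_, ?_, fun ε L h ↦ ?_⟩
  · simpa only [zero_sub, neg_sq, NNReal.coe_mk] using
      integral_gaussianPDFReal_div_rpow 0 Δ hvar τ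
  · simpa only [sub_zero, NNReal.coe_mk] using
      integral_gaussianPDFReal_div_rpow Δ 0 hvar τ
  · rw [mul_div_assoc, sq_div_two_mul_sq_of_eq_mul_sqrt_div hσ h, mul_div_assoc]

/-- Log-moment of the Gaussian privacy loss: the τ-th moment generating function of the
privacy loss of the Gaussian mechanism, together with its value for the calibrated noise. -/
theorem gaussian_privacy_loss_log_moment
    (σ Δ : ℝ) (hσ : 0 < σ) (τ : ℝ) (hτ : 0 ≤ τ) :
    (∫ z, (gaussianPDFReal 0 ⟨σ ^ 2, sq_nonneg σ⟩ z /
            gaussianPDFReal Δ ⟨σ ^ 2, sq_nonneg σ⟩ z) ^ τ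
        ∂(gaussianReal 0 ⟨σ ^ 2, sq_nonneg σ⟩))
      = Real.exp (τ * (τ + 1) * Δ ^ 2 / (2 * σ ^ 2)) ∧
    (∫ z, (gaussianPDFReal Δ ⟨σ ^ 2, sq_nonneg σ⟩ z /
            gaussianPDFReal 0 ⟨σ ^ 2, sq_nonneg σ⟩ z) ^ τ
        ∂(gaussianReal Δ ⟨σ ^ 2, sq_nonneg σ⟩))
      = Real.exp (τ * (τ + 1) * Δ ^ 2 / (2 * σ ^ 2)) ∧
    (∀ ε δ : ℝ, 0 < ε → 0 < δ → 0 < Δ →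
      σ = Δ * Real.sqrt (2 * Real.log (1.25 / δ)) / ε →
      Real.exp (τ * (τ + 1) * Δ ^ 2 / (2 * σ ^ 2))
        = Real.exp (τ * (τ + 1) * ε ^ 2 / (4 * Real.log (1.25 / δ)))) := by
  obtain ⟨h₀, h₁, hcal⟩ := gaussian_privacy_loss_log_moment_general σ Δ hσ.ne' τ
  exact ⟨h₀, h₁, fun ε δ _ _ _ ↦ hcal ε (Real.log (1.25 / δ))⟩
end

section
/- Algebraic core of the moments-accountant composition bound (Theorem: Advanced Composition). Let t ≥ 1 and ε, ε̄ > 0 be real numbers, let δ ∈ (0,1), and set L = ln(1.25/δ). Assume (i) t·ε²/(2L) < ε̄, and (ii) ln δ ≥ − t·ε²/(16L) + ε̄/2 − ε̄²·L/(t·ε²). Then ε̄ ≥ ε·√(t·ln(1/δ)/L). -/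
/-!
With `v = t ε² / (2 L)` the accumulated log-moment is `α(τ) = v τ (τ + 1) / 2`, and the right-hand
side of the condition on `log δ` is the minimum over `τ` of the tail exponent `α(τ) - τ ε̄`. It is
attained at `τ = ε̄ / v - 1 / 2`, which is positive since `v < ε̄`. Dividing
`α(τ) - τ ε̄ ≤ -log (1 / δ)` by this `τ` gives `ε̄ ≥ v / 2 + (v τ / 2 + log (1 / δ) / τ)`, and by
AM-GM the bracket is at least `√(2 v log (1 / δ)) = ε √(t log (1 / δ) / L)`.
-/

/-- The log-moment of order `τ` of the privacy loss of a Gaussian mechanism whose squared ratio of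
sensitivity to noise is `v`. It is additive in `v`: the calibration `σ² = 2 L / ε²` at sensitivity
one gives `v = ε² / (2 L)` for one iteration and `v = t ε² / (2 L)` for `t` of them. -/
noncomputable def gaussianLogMoment (v τ : ℝ) : ℝ :=
  v * (τ * (τ + 1)) / 2

theorem gaussianLogMoment_sub_mul_at_minimizer {v : ℝ} (hv : v ≠ 0) (x : ℝ) :
    gaussianLogMoment v (x / v - 1 / 2) - (x / v - 1 / 2) * x =
      -(v / 8) + x / 2 - x ^ 2 / (2 * v) := by
  unfold gaussianLogMoment
  field_simp
  ring

theorem half_add_sqrt_le_of_gaussianLogMoment_sub_mul_le {v τ x y : ℝ}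
    (hv : 0 ≤ v) (hτ : 0 < τ) (hy : 0 ≤ y) (h : gaussianLogMoment v τ - τ * x ≤ -y) :
    v / 2 + √(2 * v * y) ≤ x := by
  have amgm : √(2 * v * y) ≤ v * τ / 2 + y / τ := by
    refine Real.sqrt_le_iff.mpr ⟨by positivity, ?_⟩
    calc 2 * v * y = 4 * (v * τ / 2) * (y / τ) := by field_simp; ring
      _ ≤ (v * τ / 2 + y / τ) ^ 2 := four_mul_le_sq_add _ _
  have tail : v * (τ + 1) / 2 + y / τ ≤ x := by
    refine le_of_mul_le_mul_left ?_ hτ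
    calc τ * (v * (τ + 1) / 2 + y / τ) = gaussianLogMoment v τ + y := by
          unfold gaussianLogMoment
          field_simp
      _ ≤ τ * x := by linarith
  linarith

theorem moments_accountant_composition_general {t ε εbar δ L : ℝ}
    (ht : 0 < t) (hε : 0 < ε) (hδ : 0 < δ) (hδ1 : δ ≤ 1) (hL : 0 < L)
    (h1 : t * ε ^ 2 / (4 * L) < εbar)
    (h2 : -(t * ε ^ 2 / (16 * L)) + εbar / 2 - εbar ^ 2 * L / (t * ε ^ 2) ≤ Real.log δ) :
    t * ε ^ 2 / (4 * L) + ε * √(t * Real.log (1 / δ) / L) ≤ εbar := by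
  obtain ⟨v, hv⟩ : ∃ v, v = t * ε ^ 2 / (2 * L) := ⟨_, rfl⟩
  have v_pos : 0 < v := by rw [hv]; positivity
  have half_v : t * ε ^ 2 / (4 * L) = v / 2 := by rw [hv]; ring
  have eighth_v : t * ε ^ 2 / (16 * L) = v / 8 := by rw [hv]; ring
  have quadratic_term : εbar ^ 2 * L / (t * ε ^ 2) = εbar ^ 2 / (2 * v) := by rw [hv]; field_simp
  have minimizer_pos : 0 < εbar / v - 1 / 2 := by
    rw [sub_pos, lt_div_iff₀ v_pos]
    linarith
  have exponent_le : gaussianLogMoment v (εbar / v - 1 / 2) - (εbar / v - 1 / 2) * εbar ≤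
      -Real.log (1 / δ) := by
    rwa [gaussianLogMoment_sub_mul_at_minimizer v_pos.ne', one_div, Real.log_inv, neg_neg,
      ← eighth_v, ← quadratic_term]
  have sqrt_eq : √(2 * v * Real.log (1 / δ)) = ε * √(t * Real.log (1 / δ) / L) := by
    have : 2 * v * Real.log (1 / δ) = ε ^ 2 * (t * Real.log (1 / δ) / L) := by rw [hv]; field_simp
    rw [this, Real.sqrt_mul (sq_nonneg ε), Real.sqrt_sq hε.le]
  rw [half_v, ← sqrt_eq]
  exact half_add_sqrt_le_of_gaussianLogMoment_sub_mul_le v_pos.le minimizer_pos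
    (Real.log_nonneg (one_le_one_div hδ hδ1)) exponent_le

/-- Algebraic core of the moments-accountant composition bound (Advanced Composition). -/
theorem moments_accountant_composition
    (t : ℕ) (ht : 1 ≤ t) (ε εbar : ℝ) (hε : 0 < ε) (hεbar : 0 < εbar)
    (δ : ℝ) (hδ : 0 < δ) (hδ1 : δ < 1)
    (L : ℝ) (hL : L = Real.log (1.25 / δ))
    (h1 : (t : ℝ) * ε ^ 2 / (2 * L) < εbar)
    (h2 : Real.log δ ≥
      -((t : ℝ) * ε ^ 2 / (16 * L)) + εbar / 2 - εbar ^ 2 * L / ((t : ℝ) * ε ^ 2)) :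
    εbar ≥ ε * Real.sqrt ((t : ℝ) * Real.log (1 / δ) / L) := by
  have t_pos : (0 : ℝ) < t := by exact_mod_cast ht
  have L_pos : 0 < L := hL ▸ Real.log_pos ((one_lt_div hδ).mpr (by linarith))
  have half_le : (t : ℝ) * ε ^ 2 / (4 * L) ≤ t * ε ^ 2 / (2 * L) := by gcongr; norm_num
  have drift_nonneg : 0 ≤ (t : ℝ) * ε ^ 2 / (4 * L) := by positivity
  exact (le_add_of_nonneg_left drift_nonneg).trans
    (moments_accountant_composition_general t_pos hε hδ hδ1.le L_pos (half_le.trans_lt h1) h2)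
end

section
/- Single-iteration inequality of DP-ADMM for a convex, possibly non-smooth objective (full Lemma 2). Let E be a real inner product space, n ≥ 1 a natural number, ρ > 0, and for each i ∈ {1,…,n} let η_i > 0, let f_i : E → ℝ be convex, let w̃_i⁰, γ_i⁰ ∈ E, let w⁰ ∈ E, let ξ_i ∈ E, and let g_i ∈ E be a subgradient of f_i at w̃_i⁰ (i.e., f_i(z) ≥ f_i(w̃_i⁰) + ⟨g_i, z − w̃_i⁰⟩ for all z ∈ E). Define for each i: w̃_i¹ = (ρ + 1/η_i)⁻¹·(−g_i + γ_i⁰ + ρ·w⁰ + (1/η_i)·w̃_i⁰) + ξ_i, then w¹ = (1/n)·Σ_i w̃_i¹ − (1/(nρ))·Σ_i γ_i⁰, and γ_i¹ = γ_i⁰ − ρ·(w̃_i¹ − w¹). Then for all choices of w_i, w, γ_i ∈ E: Σ_i [ f_i(w̃_i⁰) − f_i(w_i) + ⟨−γ_i¹, w̃_i¹ − w_i⟩ + ⟨γ_i¹, w¹ − w⟩ + ⟨γ_i¹ − γ_i, w̃_i¹ − w¹⟩ ] ≤ Σ_i [ (η_i/2)·‖g_i − (ρ + 1/η_i)·ξ_i‖²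 − (ρ + 1/η_i)·⟨ξ_i, w_i − w̃_i⁰⟩ + (1/(2η_i))·(‖w_i − w̃_i⁰‖² − ‖w_i − w̃_i¹‖²) + (ρ/2)·(‖w_i − w⁰‖² − ‖w_i − w¹‖²) + (1/(2ρ))·(‖γ_i − γ_i⁰‖² − ‖γ_i − γ_i¹‖²) ]. -/
open scoped RealInnerProductSpace
open Finset

/-!
Stationarity of the linearized augmented Lagrangian, perturbed by the noise, says that the noisy
subgradient `d = g - (ρ + 1 / η) • ξ` satisfies `d + (1 / η) • (x₁ - x₀) = γ₁ + ρ • (w₀ - w₁)`, so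
each agent takes a gradient step along `d - (γ₁ + ρ • (w₀ - w₁))`. The regret bound for such a step
leaves `⟪γ₁, x₁ - z⟫` and `ρ * ⟪w₀ - w₁, x₁ - z⟫`; the latter costs an extra
`ρ / 2 * ‖x₁ - w₁‖ ^ 2`, which is exactly what the dual update gains. The global update makes the
new dual variables sum to zero, so the terms in `w` cancel across agents.
-/

section Module

variable {𝕜 E : Type*} [Field 𝕜] [AddCommGroup E] [Module 𝕜 E]

theorem admm_stationarity {ρ c : 𝕜} (hc : ρ + c ≠ 0) {g ξ x₀ x₁ w₀ w₁ γ₀ γ₁ : E}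
    (hx₁ : x₁ = (ρ + c)⁻¹ • (-g + γ₀ + ρ • w₀ + c • x₀) + ξ)
    (hγ₁ : γ₁ = γ₀ - ρ • (x₁ - w₁)) :
    g - (ρ + c) • ξ + c • (x₁ - x₀) = γ₁ + ρ • (w₀ - w₁) := by
  have h_scaled : (ρ + c) • x₁ = -g + γ₀ + ρ • w₀ + c • x₀ + (ρ + c) • ξ := by
    rw [hx₁, smul_add, smul_inv_smul₀ hc]
  rw [hγ₁, ← sub_eq_zero]
  linear_combination (norm := module) h_scaled

theorem sum_admm_dual_eq_zero [CharZero 𝕜] {ι : Type*} [Fintype ι] [Nonempty ι]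
    {ρ : 𝕜} (hρ : ρ ≠ 0) {x₁ γ₀ γ₁ : ι → E} {w₁ : E}
    (hw₁ : w₁ = (1 / (Fintype.card ι : 𝕜)) • ∑ i, x₁ i
      - (1 / ((Fintype.card ι : 𝕜) * ρ)) • ∑ i, γ₀ i)
    (hγ₁ : ∀ i, γ₁ i = γ₀ i - ρ • (x₁ i - w₁)) :
    ∑ i, γ₁ i = 0 := by
  have h_card : (Fintype.card ι : 𝕜) ≠ 0 := Nat.cast_ne_zero.mpr Fintype.card_ne_zero
  have h_sum : ∑ i, γ₁ i = ∑ i, γ₀ i - ρ • (∑ i, x₁ i - (Fintype.card ι : 𝕜) • w₁) := by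
    simp only [hγ₁, sum_sub_distrib, ← smul_sum, sum_const, card_univ, Nat.cast_smul_eq_nsmul]
  rw [h_sum, hw₁]
  match_scalars <;> field_simp <;> ring

end Module

section InnerProductSpace

variable {E : Type*} [SeminormedAddCommGroup E] [InnerProductSpace ℝ E]

theorem two_mul_real_inner_sub_sub (a b c d : E) :
    2 * ⟪a - b, c - d⟫ = ‖a - d‖ ^ 2 + ‖b - c‖ ^ 2 - ‖a - c‖ ^ 2 - ‖b - d‖ ^ 2 := by
  simp only [norm_sub_sq_real, inner_sub_left, inner_sub_right]
  ring

theorem real_inner_le_half_mul_norm_sq_add {c : ℝ} (hc : 0 < c) (x y : E) :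
    ⟪x, y⟫ ≤ c / 2 * ‖x‖ ^ 2 + 1 / (2 * c) * ‖y‖ ^ 2 := by
  have h_square : c / 2 * ‖x‖ ^ 2 + 1 / (2 * c) * ‖y‖ ^ 2 - ‖x‖ * ‖y‖ =
      1 / (2 * c) * (c * ‖x‖ - ‖y‖) ^ 2 := by
    field_simp
    ring
  have h_nonneg : 0 ≤ 1 / (2 * c) * (c * ‖x‖ - ‖y‖) ^ 2 := by positivity
  linarith [real_inner_le_norm x y]

/-- For `p = 0` this is the usual regret bound of the gradient step `x₁ = x₀ - η • d`. -/
theorem real_inner_sub_le_of_gradient_step {η : ℝ} (hη : 0 < η) {d p x₀ x₁ : E}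
    (hp : d + (1 / η) • (x₁ - x₀) = p) (z : E) :
    ⟪d, x₀ - z⟫ ≤ ⟪p, x₁ - z⟫ + η / 2 * ‖d‖ ^ 2
      + 1 / (2 * η) * (‖z - x₀‖ ^ 2 - ‖z - x₁‖ ^ 2) := by
  have h_split : ⟪d, x₀ - z⟫ = ⟪d, x₀ - x₁⟫ + ⟪d, x₁ - z⟫ := by
    rw [← inner_add_right, sub_add_sub_cancel]
  have h_correction : ⟪p, x₁ - z⟫ = ⟪d, x₁ - z⟫
      + 1 / (2 * η) * (‖z - x₁‖ ^ 2 + ‖x₀ - x₁‖ ^ 2 - ‖z - x₀‖ ^ 2) := by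
    have h_polar := two_mul_real_inner_sub_sub x₁ x₀ x₁ z
    rw [sub_self, norm_zero, norm_sub_rev x₁ z, norm_sub_rev x₀ z] at h_polar
    rw [← hp, inner_add_left, real_inner_smul_left]
    field_simp
    linarith
  linarith [real_inner_le_half_mul_norm_sq_add hη d (x₀ - x₁)]

theorem real_inner_sub_sub_le_half_norm_sq (a b x z : E) :
    ⟪a - b, x - z⟫ ≤ (‖z - a‖ ^ 2 - ‖z - b‖ ^ 2 + ‖x - b‖ ^ 2) / 2 := by
  have h_polar := two_mul_real_inner_sub_sub a b x z
  rw [norm_sub_rev a z, norm_sub_rev b z, norm_sub_rev b x] at h_polar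
  linarith [sq_nonneg ‖a - x‖]

theorem real_inner_sub_eq_of_dual_step {ρ : ℝ} (hρ : ρ ≠ 0) {γ₀ γ₁ r : E}
    (hγ₁ : γ₁ = γ₀ - ρ • r) (γ : E) :
    ⟪γ₁ - γ, r⟫ = 1 / (2 * ρ) * (‖γ - γ₀‖ ^ 2 - ‖γ - γ₁‖ ^ 2) - ρ / 2 * ‖r‖ ^ 2 := by
  have h_step : γ - γ₀ = (γ - γ₁) - ρ • r := by
    rw [hγ₁]
    abel
  rw [h_step, norm_sub_sq_real, norm_smul, mul_pow, Real.norm_eq_abs, sq_abs,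
    real_inner_smul_right, ← neg_sub γ γ₁, inner_neg_left]
  field_simp
  ring

theorem admm_agent_regret_le {ρ η : ℝ} (hρ : 0 < ρ) (hη : 0 < η)
    {g ξ x₀ x₁ w₀ w₁ γ₀ γ₁ : E}
    (hx₁ : x₁ = (ρ + 1 / η)⁻¹ • (-g + γ₀ + ρ • w₀ + (1 / η) • x₀) + ξ)
    (hγ₁ : γ₁ = γ₀ - ρ • (x₁ - w₁)) (z γ : E) :
    ⟪g, x₀ - z⟫ + ⟪-γ₁, x₁ - z⟫ + ⟪γ₁ - γ, x₁ - w₁⟫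
      ≤ η / 2 * ‖g - (ρ + 1 / η) • ξ‖ ^ 2 - (ρ + 1 / η) * ⟪ξ, z - x₀⟫
        + 1 / (2 * η) * (‖z - x₀‖ ^ 2 - ‖z - x₁‖ ^ 2)
        + ρ / 2 * (‖z - w₀‖ ^ 2 - ‖z - w₁‖ ^ 2)
        + 1 / (2 * ρ) * (‖γ - γ₀‖ ^ 2 - ‖γ - γ₁‖ ^ 2) := by
  have h_noise : ⟪g, x₀ - z⟫ =
      ⟪g - (ρ + 1 / η) • ξ, x₀ - z⟫ - (ρ + 1 / η) * ⟪ξ, z - x₀⟫ := by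
    rw [inner_sub_left, real_inner_smul_left, ← neg_sub z x₀, inner_neg_right, inner_neg_right]
    ring
  have h_primal := real_inner_sub_le_of_gradient_step hη
    (admm_stationarity (by positivity) hx₁ hγ₁) z
  have h_global := mul_le_mul_of_nonneg_left
    (real_inner_sub_sub_le_half_norm_sq w₀ w₁ x₁ z) hρ.le
  have h_dual := real_inner_sub_eq_of_dual_step hρ.ne' hγ₁ γ
  rw [inner_add_left, real_inner_smul_left] at h_primal
  rw [inner_neg_left]
  linarith

end InnerProductSpace

theorem dp_admm_one_step_nonsmooth_general
    {ι E : Type*} [Fintype ι] [Nonempty ι] [SeminormedAddCommGroup E] [InnerProductSpace ℝ E]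
    {ρ : ℝ} (hρ : 0 < ρ) {η : ι → ℝ} (hη : ∀ i, 0 < η i) {f : ι → E → ℝ}
    {wt0 γ0 : ι → E} {w0 : E} {ξ g : ι → E}
    (hg : ∀ i, ∀ z : E, f i z ≥ f i (wt0 i) + ⟪g i, z - wt0 i⟫)
    {wt1 : ι → E}
    (hwt1 : ∀ i, wt1 i =
      (ρ + 1 / η i)⁻¹ • (-(g i) + γ0 i + ρ • w0 + (1 / η i) • wt0 i) + ξ i)
    {w1 : E}
    (hw1 : w1 = (1 / (Fintype.card ι : ℝ)) • ∑ i, wt1 i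
      - (1 / ((Fintype.card ι : ℝ) * ρ)) • ∑ i, γ0 i)
    {γ1 : ι → E} (hγ1 : ∀ i, γ1 i = γ0 i - ρ • (wt1 i - w1)) (wi : ι → E) (w : E) (γ : ι → E) :
    ∑ i, (f i (wt0 i) - f i (wi i) + ⟪-(γ1 i), wt1 i - wi i⟫
          + ⟪γ1 i, w1 - w⟫ + ⟪γ1 i - γ i, wt1 i - w1⟫)
      ≤ ∑ i, (η i / 2 * ‖g i - (ρ + 1 / η i) • ξ i‖ ^ 2
          - (ρ + 1 / η i) * ⟪ξ i, wi i - wt0 i⟫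
          + 1 / (2 * η i) * (‖wi i - wt0 i‖ ^ 2 - ‖wi i - wt1 i‖ ^ 2)
          + ρ / 2 * (‖wi i - w0‖ ^ 2 - ‖wi i - w1‖ ^ 2)
          + 1 / (2 * ρ) * (‖γ i - γ0 i‖ ^ 2 - ‖γ i - γ1 i‖ ^ 2)) := by
  have h_consensus : ∑ i, ⟪γ1 i, w1 - w⟫ = 0 := by
    rw [← sum_inner, sum_admm_dual_eq_zero hρ.ne' hw1 hγ1, inner_zero_left]
  rw [← sub_nonpos, ← h_consensus, ← sum_sub_distrib]
  refine sum_le_sum fun i _ ↦ ?_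
  have h_subgradient : f i (wt0 i) - f i (wi i) ≤ ⟪g i, wt0 i - wi i⟫ := by
    rw [← neg_sub (wi i), inner_neg_right]
    linarith [hg i (wi i)]
  linarith [admm_agent_regret_le hρ (hη i) (hwt1 i) (hγ1 i) (wi i) (γ i)]

/-- Single-iteration inequality of DP-ADMM for a convex, possibly non-smooth objective
(full Lemma 2). -/
theorem dp_admm_one_step_nonsmooth
    {E : Type*} [NormedAddCommGroup E] [InnerProductSpace ℝ E]
    (n : ℕ) (hn : 1 ≤ n) (ρ : ℝ) (hρ : 0 < ρ)
    (η : Fin n → ℝ) (hη : ∀ i, 0 < η i)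
    (f : Fin n → E → ℝ) (hf : ∀ i, ConvexOn ℝ Set.univ (f i))
    (wt0 γ0 : Fin n → E) (w0 : E) (ξ g : Fin n → E)
    (hg : ∀ i, ∀ z : E, f i z ≥ f i (wt0 i) + ⟪g i, z - wt0 i⟫)
    (wt1 : Fin n → E)
    (hwt1 : ∀ i, wt1 i =
      (ρ + 1 / η i)⁻¹ • (-(g i) + γ0 i + ρ • w0 + (1 / η i) • wt0 i) + ξ i)
    (w1 : E)
    (hw1 : w1 = (1 / (n : ℝ)) • ∑ i, wt1 i - (1 / ((n : ℝ) * ρ)) • ∑ i, γ0 i)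
    (γ1 : Fin n → E) (hγ1 : ∀ i, γ1 i = γ0 i - ρ • (wt1 i - w1)) :
    ∀ (wi : Fin n → E) (w : E) (γ : Fin n → E),
      ∑ i, (f i (wt0 i) - f i (wi i) + ⟪-(γ1 i), wt1 i - wi i⟫
            + ⟪γ1 i, w1 - w⟫ + ⟪γ1 i - γ i, wt1 i - w1⟫)
      ≤ ∑ i, (η i / 2 * ‖g i - (ρ + 1 / η i) • ξ i‖ ^ 2
            - (ρ + 1 / η i) * ⟪ξ i, wi i - wt0 i⟫
            + 1 / (2 * η i) * (‖wi i - wt0 i‖ ^ 2 - ‖wi i - wt1 i‖ ^ 2)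
            + ρ / 2 * (‖wi i - w0‖ ^ 2 - ‖wi i - w1‖ ^ 2)
            + 1 / (2 * ρ) * (‖γ i - γ0 i‖ ^ 2 - ‖γ i - γ1 i‖ ^ 2)) := by
  have : Nonempty (Fin n) := Fin.pos_iff_nonempty.mp hn
  exact dp_admm_one_step_nonsmooth_general hρ hη hg hwt1
    (by simpa only [Fintype.card_fin] using hw1) hγ1
end

section
/- Single-iteration inequality of DP-ADMM for a convex smooth objective (full Lemma 3). Let E be a finite-dimensional real inner product space, n ≥ 1, ρ > 0, and L ≥ 0. For each i ∈ {1,…,n} let f_i : E → ℝ be convex and differentiable with L-Lipschitz gradient, let η_i > 0 satisfy 1/η_i > L, let w̃_i⁰, γ_i⁰, w⁰, ξ_i ∈ E. Define w̃_i¹ = (ρ + 1/η_i)⁻¹·(−∇f_i(w̃_i⁰) + γ_i⁰ + ρ·w⁰ + (1/η_i)·w̃_i⁰) + ξ_i, then w¹ = (1/n)·Σ_i w̃_i¹ − (1/(nρ))·Σ_i γ_i⁰, and γ_i¹ = γ_i⁰ − ρ·(w̃_i¹ − w¹). Then for all w_i, w, γ_i ∈ E: Σ_i [ f_i(w̃_i¹)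 − f_i(w_i) + ⟨−γ_i¹, w̃_i¹ − w_i⟩ + ⟨γ_i¹, w¹ − w⟩ + ⟨γ_i¹ − γ_i, w̃_i¹ − w¹⟩ ] ≤ Σ_i [ ((ρ + 1/η_i)²/(2·(1/η_i − L)))·‖ξ_i‖² − (ρ + 1/η_i)·⟨ξ_i, w_i − w̃_i⁰⟩ + (1/(2η_i))·(‖w_i − w̃_i⁰‖² − ‖w_i − w̃_i¹‖²) + (ρ/2)·(‖w_i − w⁰‖² − ‖w_i − w¹‖²) + (1/(2ρ))·(‖γ_i − γ_i⁰‖² − ‖γ_i − γ_i¹‖²) ]. -/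
open scoped RealInnerProductSpace
open Finset

/-!
Convexity at `w̃⁰` and the descent lemma between `w̃⁰` and `w̃¹` bound `f(w̃¹) - f(wᵢ)` by
`⟪∇f(w̃⁰), w̃¹ - wᵢ⟫ + L/2 ‖w̃¹ - w̃⁰‖²`. The primal and dual updates turn the gradient into
`γ¹ + ρ (w⁰ - w¹) + (w̃⁰ - w̃¹)/η + (ρ + 1/η) ξ`. Pairing the second and third terms with `w̃¹ - wᵢ`
gives differences of squared distances, up to an excess `ρ/2 ‖w̃¹ - w¹‖²` that the dual terms
cancel. The noise term is split at `w̃⁰`, and Young's inequality absorbs `⟪ξ, w̃¹ - w̃⁰⟫` into the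
surplus `(1/η - L)/2 ‖w̃¹ - w̃⁰‖²`. After summation over the agents, the terms `⟪γ¹, w¹ - w⟫` cancel
because the averaging step makes the new dual variables sum to zero.
-/

section Derivative

variable {E : Type*} [NormedAddCommGroup E] [NormedSpace ℝ E]

theorem norm_image_sub_sub_fderiv_le {F : Type*} [NormedAddCommGroup F] [NormedSpace ℝ F]
    {f : E → F} {f' : E → E →L[ℝ] F} {x y : E} {L : ℝ}
    (hf : ∀ z ∈ segment ℝ x y, HasFDerivAt f (f' z) z)
    (hlip : ∀ z ∈ segment ℝ x y, ‖f' z - f' x‖ ≤ L * ‖z - x‖) :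
    ‖f y - f x - f' x (y - x)‖ ≤ L / 2 * ‖y - x‖ ^ 2 := by
  let p : ℝ → E := AffineMap.lineMap x y
  have mem_segment {t : ℝ} (ht : t ∈ Set.Icc (0 : ℝ) 1) : p t ∈ segment ℝ x y :=
    segment_eq_image_lineMap ℝ x y ▸ Set.mem_image_of_mem _ ht
  have remainder_deriv {t : ℝ} (ht : t ∈ Set.Icc (0 : ℝ) 1) :
      HasDerivAt (fun s => f (p s) - f x - s • f' x (y - x))
        (f' (p t) (y - x) - f' x (y - x)) t := by
    have hp : HasDerivAt p (y - x) t := AffineMap.hasDerivAt_lineMap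
    simpa using (((hf _ (mem_segment ht)).comp_hasDerivAt t hp).sub_const (f x)).fun_sub
      ((hasDerivAt_id t).smul_const (f' x (y - x)))
  have bound_deriv (t : ℝ) :
      HasDerivAt (fun s : ℝ => L / 2 * ‖y - x‖ ^ 2 * s ^ 2) (L * t * ‖y - x‖ ^ 2) t := by
    refine ((hasDerivAt_pow 2 t).const_mul (L / 2 * ‖y - x‖ ^ 2)).congr_deriv ?_
    norm_num
    ring
  have norm_deriv_le (t : ℝ) (ht : t ∈ Set.Ico (0 : ℝ) 1) :
      ‖f' (p t) (y - x) - f' x (y - x)‖ ≤ L * t * ‖y - x‖ ^ 2 :=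
    calc ‖f' (p t) (y - x) - f' x (y - x)‖
      _ ≤ ‖f' (p t) - f' x‖ * ‖y - x‖ := (f' (p t) - f' x).le_opNorm (y - x)
      _ ≤ L * ‖p t - x‖ * ‖y - x‖ := by
        gcongr
        exact hlip _ (mem_segment (Set.Ico_subset_Icc_self ht))
      _ = L * t * ‖y - x‖ ^ 2 := by
        rw [show p t - x = t • (y - x) by simp [p, AffineMap.lineMap_apply], norm_smul,
          Real.norm_of_nonneg ht.1]
        ring
  simpa [p] using image_norm_le_of_norm_deriv_right_le_deriv_boundary
    (fun t ht => (remainder_deriv ht).continuousAt.continuousWithinAt)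
    (fun t ht => (remainder_deriv (Set.Ico_subset_Icc_self ht)).hasDerivWithinAt)
    (by simp [p]) bound_deriv norm_deriv_le (Set.right_mem_Icc.2 zero_le_one)

theorem add_fderiv_sub_le_of_convexOn {s : Set E} {f : E → ℝ} {f' : E →L[ℝ] ℝ} {x y : E}
    (hconv : ConvexOn ℝ s f) (hx : x ∈ s) (hy : y ∈ s) (hf : HasFDerivWithinAt f f' s x) :
    f x + f' (y - x) ≤ f y := by
  let p : ℝ →ᵃ[ℝ] E := AffineMap.lineMap x y
  have hp : HasDerivWithinAt p (y - x) (p ⁻¹' s) 0 := AffineMap.hasDerivWithinAt_lineMap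
  have hfp : HasDerivWithinAt (f ∘ p) (f' (y - x)) (p ⁻¹' s) 0 :=
    HasFDerivWithinAt.comp_hasDerivWithinAt (t := s) 0 (by simpa [p] using hf) hp
      (Set.mapsTo_preimage p s)
  have slope_bound := (hconv.comp_affineMap p).le_slope_of_hasDerivWithinAt
    (by simpa [p] using hx) (by simpa [p] using hy) zero_lt_one hfp
  simp only [slope_def_field, Function.comp_apply, p, AffineMap.lineMap_apply_zero,
    AffineMap.lineMap_apply_one, sub_zero, div_one] at slope_bound
  linarith

theorem sub_le_fderiv_sub_add_of_convexOn {s : Set E} {f : E → ℝ} {f' : E → E →L[ℝ] ℝ}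
    {x y z : E} {L : ℝ} (hconv : ConvexOn ℝ s f) (hx : x ∈ s) (hz : z ∈ s)
    (hf : ∀ v ∈ segment ℝ x y, HasFDerivAt f (f' v) v)
    (hlip : ∀ v ∈ segment ℝ x y, ‖f' v - f' x‖ ≤ L * ‖v - x‖) :
    f y - f z ≤ f' x (y - z) + L / 2 * ‖y - x‖ ^ 2 := by
  have descent : f y - f x - f' x (y - x) ≤ L / 2 * ‖y - x‖ ^ 2 :=
    (le_abs_self _).trans (norm_image_sub_sub_fderiv_le hf hlip)
  have tangent : f x + f' x (z - x) ≤ f z :=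
    add_fderiv_sub_le_of_convexOn hconv hx hz (hf x (left_mem_segment ℝ x y)).hasFDerivWithinAt
  simp only [map_sub] at descent tangent ⊢
  linarith

end Derivative

section Inner

variable {E : Type*} [NormedAddCommGroup E] [InnerProductSpace ℝ E]

theorem real_inner_sub_sub_eq_norm_sq (a b c d : E) :
    ⟪a - b, c - d⟫ = (‖d - a‖ ^ 2 - ‖d - b‖ ^ 2 + ‖c - b‖ ^ 2 - ‖c - a‖ ^ 2) / 2 := by
  simp only [norm_sub_sq_real, inner_sub_left, inner_sub_right, real_inner_comm]
  ring

theorem real_inner_le_norm_sq_add_norm_sq {c : ℝ} (hc : 0 < c) (x y : E) :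
    ⟪x, y⟫ ≤ ‖x‖ ^ 2 / (2 * c) + c / 2 * ‖y‖ ^ 2 := by
  have young := two_mul_le_add_mul_sq (a := ‖y‖) (b := ‖x‖) hc
  calc ⟪x, y⟫
    _ ≤ ‖x‖ * ‖y‖ := real_inner_le_norm x y
    _ ≤ (c * ‖y‖ ^ 2 + c⁻¹ * ‖x‖ ^ 2) / 2 := by linarith
    _ = ‖x‖ ^ 2 / (2 * c) + c / 2 * ‖y‖ ^ 2 := by field_simp; ring

end Inner

section Updates

variable {K M : Type*} [Field K] [AddCommGroup M] [Module K M]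

theorem sum_dual_update_eq_zero {ι : Type*} [Fintype ι] {ρ : K} (hρ : ρ ≠ 0)
    (hι : (Fintype.card ι : K) ≠ 0) {x γ₀ γ₁ : ι → M} {w : M}
    (hw : w = (1 / (Fintype.card ι : K)) • ∑ i, x i
      - (1 / ((Fintype.card ι : K) * ρ)) • ∑ i, γ₀ i)
    (hγ₁ : ∀ i, γ₁ i = γ₀ i - ρ • (x i - w)) :
    ∑ i, γ₁ i = 0 := by
  have card_smul_w :
      (Fintype.card ι : K) • w = ∑ i, x i - ρ⁻¹ • ∑ i, γ₀ i := by
    rw [hw]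
    match_scalars <;> field_simp
  calc ∑ i, γ₁ i
    _ = ∑ i, γ₀ i - ρ • (∑ i, x i - (Fintype.card ι : K) • w) := by
      simp only [hγ₁, sum_sub_distrib, ← smul_sum, sum_const, card_univ, Nat.cast_smul_eq_nsmul]
    _ = 0 := by
      rw [card_smul_w, sub_sub_cancel, smul_inv_smul₀ hρ, sub_self]

theorem gradient_eq_of_primal_dual_update {ρ a : K} (h : ρ + a ≠ 0)
    {g x₀ x₁ γ₀ γ₁ w₀ w₁ ξ : M}
    (hx₁ : x₁ = (ρ + a)⁻¹ • (-g + γ₀ + ρ • w₀ + a • x₀) + ξ)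
    (hγ₁ : γ₁ = γ₀ - ρ • (x₁ - w₁)) :
    g = γ₁ + ρ • (w₀ - w₁) + a • (x₀ - x₁) + (ρ + a) • ξ := by
  have stationarity : (ρ + a) • (x₁ - ξ) = -g + γ₀ + ρ • w₀ + a • x₀ := by
    rw [hx₁, add_sub_cancel_right, smul_inv_smul₀ h]
  calc g
    _ = γ₀ + ρ • w₀ + a • x₀ - (-g + γ₀ + ρ • w₀ + a • x₀) := by abel
    _ = γ₁ + ρ • (w₀ - w₁) + a • (x₀ - x₁) + (ρ + a) • ξ := by
      rw [← stationarity, hγ₁]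
      module

end Updates

section Agent

variable {E : Type*} [NormedAddCommGroup E] [InnerProductSpace ℝ E]

theorem inner_dual_update_sub {ρ : ℝ} (hρ : ρ ≠ 0) {x w γ₀ γ₁ : E}
    (hγ₁ : γ₁ = γ₀ - ρ • (x - w)) (γ : E) :
    ⟪γ₁ - γ, x - w⟫
      = 1 / (2 * ρ) * (‖γ - γ₀‖ ^ 2 - ‖γ - γ₁‖ ^ 2) - ρ / 2 * ‖x - w‖ ^ 2 := by
  have step : γ₀ - γ₁ = ρ • (x - w) := by rw [hγ₁, sub_sub_cancel]
  have residual : x - w = ρ⁻¹ • (γ₀ - γ₁) := by rw [step, inv_smul_smul₀ hρ]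
  have step_norm_sq : ‖γ₁ - γ₀‖ ^ 2 = ρ ^ 2 * ‖x - w‖ ^ 2 := by
    rw [norm_sub_rev, step, norm_smul, mul_pow, Real.norm_eq_abs, sq_abs]
  calc ⟪γ₁ - γ, x - w⟫
    _ = ρ⁻¹ * ⟪γ₀ - γ₁, γ₁ - γ⟫ := by
      rw [residual, real_inner_smul_right, real_inner_comm]
    _ = 1 / (2 * ρ) * (‖γ - γ₀‖ ^ 2 - ‖γ - γ₁‖ ^ 2) - ρ / 2 * ‖x - w‖ ^ 2 := by
      rw [real_inner_sub_sub_eq_norm_sq, sub_self, norm_zero, step_norm_sq]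
      field_simp
      ring

theorem inner_gradient_sub_add_le {ρ a L : ℝ} (hρ : 0 ≤ ρ) (haL : L < a)
    {g x₀ x₁ γ₁ w₀ w₁ ξ : E}
    (hg : g = γ₁ + ρ • (w₀ - w₁) + a • (x₀ - x₁) + (ρ + a) • ξ) (u : E) :
    ⟪g, x₁ - u⟫ + L / 2 * ‖x₁ - x₀‖ ^ 2
      ≤ ⟪γ₁, x₁ - u⟫ + (ρ + a) ^ 2 / (2 * (a - L)) * ‖ξ‖ ^ 2 - (ρ + a) * ⟪ξ, u - x₀⟫
        + a / 2 * (‖u - x₀‖ ^ 2 - ‖u - x₁‖ ^ 2)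
        + ρ / 2 * (‖u - w₀‖ ^ 2 - ‖u - w₁‖ ^ 2) + ρ / 2 * ‖x₁ - w₁‖ ^ 2 := by
  have expand : ⟪g, x₁ - u⟫ = ⟪γ₁, x₁ - u⟫ + ρ * ⟪w₀ - w₁, x₁ - u⟫
      + a * ⟪x₀ - x₁, x₁ - u⟫ + ⟪(ρ + a) • ξ, x₁ - x₀⟫ - (ρ + a) * ⟪ξ, u - x₀⟫ := by
    rw [hg]
    simp only [inner_add_left, real_inner_smul_left, inner_sub_right]
    ring
  have noise : ⟪(ρ + a) • ξ, x₁ - x₀⟫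
      ≤ (ρ + a) ^ 2 / (2 * (a - L)) * ‖ξ‖ ^ 2 + (a - L) / 2 * ‖x₁ - x₀‖ ^ 2 := by
    have young := real_inner_le_norm_sq_add_norm_sq (sub_pos.2 haL) ((ρ + a) • ξ) (x₁ - x₀)
    rwa [norm_smul, mul_pow, Real.norm_eq_abs, sq_abs, mul_div_right_comm] at young
  have consensus : ρ * ⟪w₀ - w₁, x₁ - u⟫
      ≤ ρ / 2 * (‖u - w₀‖ ^ 2 - ‖u - w₁‖ ^ 2) + ρ / 2 * ‖x₁ - w₁‖ ^ 2 := by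
    rw [real_inner_sub_sub_eq_norm_sq]
    linarith [mul_nonneg hρ (sq_nonneg ‖x₁ - w₀‖)]
  have proximal : a * ⟪x₀ - x₁, x₁ - u⟫
      = a / 2 * (‖u - x₀‖ ^ 2 - ‖u - x₁‖ ^ 2) - a / 2 * ‖x₁ - x₀‖ ^ 2 := by
    rw [real_inner_sub_sub_eq_norm_sq, sub_self, norm_zero]
    ring
  linarith

theorem dp_admm_agent_step_le {f : E → ℝ} {g : E → E} {ρ a L : ℝ} (hρ : 0 < ρ) (ha : 0 < a)
    (haL : L < a) (hconv : ConvexOn ℝ Set.univ f)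
    (hf : ∀ x, HasFDerivAt f (innerSL ℝ (g x)) x)
    (hlip : ∀ x y, ‖g x - g y‖ ≤ L * ‖x - y‖) {x₀ x₁ γ₀ γ₁ w₀ w₁ ξ : E}
    (hx₁ : x₁ = (ρ + a)⁻¹ • (-g x₀ + γ₀ + ρ • w₀ + a • x₀) + ξ)
    (hγ₁ : γ₁ = γ₀ - ρ • (x₁ - w₁)) (u γ : E) :
    f x₁ - f u + ⟪-γ₁, x₁ - u⟫ + ⟪γ₁ - γ, x₁ - w₁⟫
      ≤ (ρ + a) ^ 2 / (2 * (a - L)) * ‖ξ‖ ^ 2 - (ρ + a) * ⟪ξ, u - x₀⟫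
        + a / 2 * (‖u - x₀‖ ^ 2 - ‖u - x₁‖ ^ 2)
        + ρ / 2 * (‖u - w₀‖ ^ 2 - ‖u - w₁‖ ^ 2)
        + 1 / (2 * ρ) * (‖γ - γ₀‖ ^ 2 - ‖γ - γ₁‖ ^ 2) := by
  have fderiv_lipschitz (z : E) : ‖innerSL ℝ (g z) - innerSL ℝ (g x₀)‖ ≤ L * ‖z - x₀‖ := by
    rw [← map_sub, innerSL_apply_norm]
    exact hlip z x₀
  have objective : f x₁ - f u ≤ ⟪g x₀, x₁ - u⟫ + L / 2 * ‖x₁ - x₀‖ ^ 2 :=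
    sub_le_fderiv_sub_add_of_convexOn hconv (Set.mem_univ x₀) (Set.mem_univ u)
      (fun z _ => hf z) (fun z _ => fderiv_lipschitz z)
  have linearized := inner_gradient_sub_add_le hρ.le haL
    (gradient_eq_of_primal_dual_update (add_pos hρ ha).ne' hx₁ hγ₁) u
  rw [inner_neg_left, inner_dual_update_sub hρ.ne' hγ₁]
  linarith

end Agent

theorem dp_admm_one_step_smooth_general
    {E : Type*} [NormedAddCommGroup E] [InnerProductSpace ℝ E]
    {ι : Type*} [Fintype ι] [Nonempty ι] {ρ : ℝ} (hρ : 0 < ρ) {L : ι → ℝ}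
    {f : ι → E → ℝ} {g : ι → E → E} (hconv : ∀ i, ConvexOn ℝ Set.univ (f i))
    (hf : ∀ i x, HasFDerivAt (f i) (innerSL ℝ (g i x)) x)
    (hlip : ∀ i x y, ‖g i x - g i y‖ ≤ L i * ‖x - y‖)
    {η : ι → ℝ} (hη : ∀ i, 0 < η i) (hηL : ∀ i, L i < 1 / η i)
    {wt0 γ0 : ι → E} {w0 : E} {ξ wt1 : ι → E}
    (hwt1 : ∀ i, wt1 i = (ρ + 1 / η i)⁻¹ •
      (-g i (wt0 i) + γ0 i + ρ • w0 + (1 / η i) • wt0 i) + ξ i)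
    {w1 : E} (hw1 : w1 = (1 / (Fintype.card ι : ℝ)) • ∑ i, wt1 i
      - (1 / ((Fintype.card ι : ℝ) * ρ)) • ∑ i, γ0 i)
    {γ1 : ι → E} (hγ1 : ∀ i, γ1 i = γ0 i - ρ • (wt1 i - w1))
    (wi : ι → E) (w : E) (γ : ι → E) :
    ∑ i, (f i (wt1 i) - f i (wi i) + ⟪-(γ1 i), wt1 i - wi i⟫
          + ⟪γ1 i, w1 - w⟫ + ⟪γ1 i - γ i, wt1 i - w1⟫)
    ≤ ∑ i, ((ρ + 1 / η i) ^ 2 / (2 * (1 / η i - L i)) * ‖ξ i‖ ^ 2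
          - (ρ + 1 / η i) * ⟪ξ i, wi i - wt0 i⟫
          + 1 / (2 * η i) * (‖wi i - wt0 i‖ ^ 2 - ‖wi i - wt1 i‖ ^ 2)
          + ρ / 2 * (‖wi i - w0‖ ^ 2 - ‖wi i - w1‖ ^ 2)
          + 1 / (2 * ρ) * (‖γ i - γ0 i‖ ^ 2 - ‖γ i - γ1 i‖ ^ 2)) := by
  have sum_inner_dual : ∑ i, ⟪γ1 i, w1 - w⟫ = 0 := by
    rw [← sum_inner, sum_dual_update_eq_zero hρ.ne' (by simp) hw1 hγ1, inner_zero_left]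
  calc
    _ = ∑ i, (f i (wt1 i) - f i (wi i) + ⟪-(γ1 i), wt1 i - wi i⟫
          + ⟪γ1 i - γ i, wt1 i - w1⟫) := by
      simp_rw [add_right_comm _ ⟪γ1 _, w1 - w⟫]
      rw [sum_add_distrib, sum_inner_dual, add_zero]
    _ ≤ _ := by
      refine sum_le_sum fun i _ => ?_
      rw [show 1 / (2 * η i) = 1 / η i / 2 by rw [div_div, mul_comm]]
      exact dp_admm_agent_step_le hρ (one_div_pos.2 (hη i)) (hηL i) (hconv i) (hf i) (hlip i)
        (hwt1 i) (hγ1 i) (wi i) (γ i)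

/-- Single-iteration inequality of DP-ADMM for a convex smooth objective (full Lemma 3). -/
theorem dp_admm_one_step_smooth
    {E : Type*} [NormedAddCommGroup E] [InnerProductSpace ℝ E] [FiniteDimensional ℝ E]
    (n : ℕ) (hn : 1 ≤ n) (ρ L : ℝ) (hρ : 0 < ρ) (hL : 0 ≤ L)
    (f : Fin n → E → ℝ) (hf : ∀ i, ConvexOn ℝ Set.univ (f i))
    (hdiff : ∀ i, Differentiable ℝ (f i))
    (hlip : ∀ i, ∀ x y : E, ‖gradient (f i) x - gradient (f i) y‖ ≤ L * ‖x - y‖)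
    (η : Fin n → ℝ) (hη : ∀ i, 0 < η i) (hηL : ∀ i, L < 1 / η i)
    (wt0 γ0 : Fin n → E) (w0 : E) (ξ : Fin n → E)
    (wt1 : Fin n → E)
    (hwt1 : ∀ i, wt1 i = (ρ + 1 / η i)⁻¹ •
      (-(gradient (f i) (wt0 i)) + γ0 i + ρ • w0 + (1 / η i) • wt0 i) + ξ i)
    (w1 : E)
    (hw1 : w1 = (1 / (n : ℝ)) • ∑ i, wt1 i - (1 / ((n : ℝ) * ρ)) • ∑ i, γ0 i)
    (γ1 : Fin n → E) (hγ1 : ∀ i, γ1 i = γ0 i - ρ • (wt1 i - w1)) :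
    ∀ (wi : Fin n → E) (w : E) (γ : Fin n → E),
      ∑ i, (f i (wt1 i) - f i (wi i) + ⟪-(γ1 i), wt1 i - wi i⟫
            + ⟪γ1 i, w1 - w⟫ + ⟪γ1 i - γ i, wt1 i - w1⟫)
      ≤ ∑ i, ((ρ + 1 / η i) ^ 2 / (2 * (1 / η i - L)) * ‖ξ i‖ ^ 2
            - (ρ + 1 / η i) * ⟪ξ i, wi i - wt0 i⟫
            + 1 / (2 * η i) * (‖wi i - wt0 i‖ ^ 2 - ‖wi i - wt1 i‖ ^ 2)
            + ρ / 2 * (‖wi i - w0‖ ^ 2 - ‖wi i - w1‖ ^ 2)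
            + 1 / (2 * ρ) * (‖γ i - γ0 i‖ ^ 2 - ‖γ i - γ1 i‖ ^ 2)) := by
  have : Nonempty (Fin n) := Fin.pos_iff_nonempty.1 hn
  exact dp_admm_one_step_smooth_general hρ hf (fun i x => (hdiff i x).hasGradientAt.hasFDerivAt)
    hlip hη hηL hwt1 (by simpa only [Fintype.card_fin] using hw1) hγ1
end

section
/- Deterministic (pathwise) form of the convergence bound for DP-ADMM with convex smooth objectives (core of Theorem 3). Let E be a finite-dimensional real inner product space, n ≥ 1 and t ≥ 1 natural numbers, ρ > 0, L ≥ 0. For each i ∈ {1,…,n}: f_i : E → ℝ is convex and differentiable with L-Lipschitz gradient, and η_i^1 ≥ … ≥ η_i^t > 0 with 1/η_i^k > L for all k. Suppose given w̃_i^k (0 ≤ k ≤ t), w^k (0 ≤ k ≤ t), γ_i^k (0 ≤ k ≤ t), and ξ_i^k (1 ≤ k ≤ t) in E such that for every i and 1 ≤ k ≤ t: (i) w̃_i^k = (ρ + 1/η_i^k)⁻¹·(−∇f_i(w̃_i^{k−1}) + γ_i^{k−1} + ρ·w^{k−1} + (1/η_i^k)·w̃_i^{k−1}) + ξ_i^k;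 (ii) w^k = (1/n)·Σ_i w̃_i^k − (1/(nρ))·Σ_i γ_i^{k−1}; (iii) γ_i^k = γ_i^{k−1} − ρ·(w̃_i^k − w^k). Suppose γ_i^0 = 0 for all i, and that w* ∈ E and constants c, c_w ≥ 0 satisfy ‖w* − w̃_i^k‖ ≤ c for all i and 0 ≤ k ≤ t−1, and ‖w* − w^0‖ ≤ c_w. Define w̄_i = (1/t)·Σ_{k=1}^{t} w̃_i^k and w̄ = (1/t)·Σ_{k=1}^{t} w^k. Then for every β ≥ 0: Σ_i ( f_i(w̄_i) − f_i(w*) + β·‖w̄_i − w̄‖ ) ≤ (1/t)·Σ_i Σ_{k=1}^{t} [ ((ρ + 1/η_i^k)²/(2·(1/η_i^k − L)))·‖ξ_i^k‖² − (ρ + 1/η_i^k)·⟨ξ_i^k, w* − w̃_i^{k−1}⟩ ] + (1/t)·Σ_i c²/(2·η_i^t) + n·ρ·c_w²/(2t) + n·β²/(2ρt). -/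
open scoped RealInnerProductSpace
open Finset

/-!
Convexity and the descent lemma bound the suboptimality of an iterate by
`⟪∇f(x), y - s⟫ + L/2 ‖y - x‖²`, where `x` and `y` are consecutive local iterates and `s` is the
comparator. Solving the primal update for `∇f(x)` splits this inner product into a proximal, a
noise, a consensus and a dual part; each part but the noise telescopes up to quadratic errors, and
the margin `1/η - L > 0` together with Young's inequality absorbs the error in `‖y - x‖²`. The
remaining terms `⟪γᵢ, w - s⟫` cancel on summing over the agents, because the consensus update keeps
`∑ᵢ γᵢ = 0`, and Jensen's inequality passes to the averaged iterates. The penalty `β ‖w̄ᵢ - w̄‖` is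
the value of a linear functional `⟪u, ·⟫` with `‖u‖ ≤ |β|`, and such functionals are absorbed by
shifting the dual variables by `u`.
-/

section Telescoping

theorem sum_Icc_one_pred_sub {M : Type*} [AddCommGroup M] (D : ℕ → M) (t : ℕ) :
    ∑ k ∈ Icc 1 t, (D (k - 1) - D k) = D 0 - D t := by
  induction t with
  | zero => simp
  | succ t ih => rw [sum_Icc_succ_top (by omega), ih, Nat.add_sub_cancel, sub_add_sub_cancel]

theorem sum_Icc_one_mul_pred_sub_le {a D : ℕ → ℝ} {M : ℝ} {t : ℕ} (ht : 1 ≤ t) (ha₁ : 0 ≤ a 1)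
    (ha : ∀ k, 1 ≤ k → k < t → a k ≤ a (k + 1)) (hD : ∀ k < t, D k ≤ M) :
    ∑ k ∈ Icc 1 t, a k * (D (k - 1) - D k) ≤ a t * (M - D t) := by
  induction t, ht using Nat.le_induction with
  | base => simpa using mul_le_mul_of_nonneg_left (sub_le_sub_right (hD 0 one_pos) (D 1)) ha₁
  | succ t ht ih =>
    have hprev := ih (fun k hk hkt => ha k hk (by omega)) fun k hkt => hD k (by omega)
    have hweight : a t * (M - D t) ≤ a (t + 1) * (M - D t) :=
      mul_le_mul_of_nonneg_right (ha t ht t.lt_succ_self) (sub_nonneg.2 (hD t t.lt_succ_self))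
    rw [sum_Icc_succ_top (by omega), Nat.add_sub_cancel]
    linarith

theorem sum_Icc_one_div_mul_pred_sub_le {η D : ℕ → ℝ} {M : ℝ} {t : ℕ} (ht : 1 ≤ t)
    (hη : ∀ k, 1 ≤ k → k ≤ t → 0 < η k) (hηmono : ∀ k, 1 ≤ k → k < t → η (k + 1) ≤ η k)
    (hD : ∀ k < t, D k ≤ M) (hDt : 0 ≤ D t) :
    ∑ k ∈ Icc 1 t, 1 / (2 * η k) * (D (k - 1) - D k) ≤ M / (2 * η t) := by
  have hη₁ := hη 1 le_rfl ht
  have hηt := hη t ht le_rfl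
  have hmono : ∀ k, 1 ≤ k → k < t → 1 / (2 * η k) ≤ 1 / (2 * η (k + 1)) := fun k hk hkt => by
    have hpos := hη (k + 1) (by omega) hkt
    have hle := hηmono k hk hkt
    gcongr
  calc ∑ k ∈ Icc 1 t, 1 / (2 * η k) * (D (k - 1) - D k)
      ≤ 1 / (2 * η t) * (M - D t) := sum_Icc_one_mul_pred_sub_le ht (by positivity) hmono hD
    _ ≤ 1 / (2 * η t) * M := mul_le_mul_of_nonneg_left (sub_le_self M hDt) (by positivity)
    _ = M / (2 * η t) := one_div_mul_eq_div _ _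

end Telescoping

section Jensen

theorem map_average_le_of_convexOn {E ι : Type*} [AddCommGroup E] [Module ℝ E] {S : Set E}
    {f : E → ℝ} (hf : ConvexOn ℝ S f) {s : Finset ι} (hs : s.Nonempty) {x : ι → E}
    (hx : ∀ k ∈ s, x k ∈ S) :
    f ((1 / (#s : ℝ)) • ∑ k ∈ s, x k) ≤ 1 / (#s : ℝ) * ∑ k ∈ s, f (x k) := by
  have hcard : (#s : ℝ) ≠ 0 := Nat.cast_ne_zero.2 hs.card_ne_zero
  simpa only [smul_sum, smul_eq_mul, mul_sum] using
    hf.map_sum_le (w := fun _ => 1 / (#s : ℝ)) (fun _ _ => by positivity) (by simp [hcard]) hx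

end Jensen

section InnerProduct

variable {E : Type*} [NormedAddCommGroup E] [InnerProductSpace ℝ E]

theorem inner_sub_sub_eq_norm_sq (x y z : E) :
    ⟪x - y, y - z⟫ = (‖x - z‖ ^ 2 - ‖x - y‖ ^ 2 - ‖y - z‖ ^ 2) / 2 := by
  rw [← sub_add_sub_cancel x y z, norm_add_sq_real]
  ring

theorem real_inner_le_young {μ : ℝ} (hμ : 0 < μ) (x y : E) :
    ⟪x, y⟫ ≤ ‖x‖ ^ 2 / (2 * μ) + μ / 2 * ‖y‖ ^ 2 := by
  have hyoung := two_mul_le_add_mul_sq (a := ‖y‖) (b := ‖x‖) hμ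
  have hinv : ‖x‖ ^ 2 / (2 * μ) = μ⁻¹ * ‖x‖ ^ 2 / 2 := by field_simp
  linarith [real_inner_le_norm x y]

theorem exists_norm_le_inner_eq_mul_norm (β : ℝ) (d : E) :
    ∃ u : E, ‖u‖ ≤ |β| ∧ ⟪u, d⟫ = β * ‖d‖ := by
  rcases eq_or_ne d 0 with rfl | hd
  · exact ⟨0, by simp⟩
  have hnorm : ‖d‖ ≠ 0 := norm_ne_zero_iff.2 hd
  refine ⟨(β / ‖d‖) • d, ?_, ?_⟩
  · rw [norm_smul, norm_div, norm_norm, div_mul_cancel₀ _ hnorm, Real.norm_eq_abs]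
  · rw [real_inner_smul_left, real_inner_self_eq_norm_sq]
    field_simp

end InnerProduct

section Gap

variable {E ι : Type*} [NormedAddCommGroup E] [InnerProductSpace ℝ E]

theorem average_gap_add_inner_le {f : E → ℝ} (hf : ConvexOn ℝ Set.univ f) {S : Finset ι}
    (hS : S.Nonempty) (x p : ι → E) (a : ℝ) (u : E) :
    f ((1 / (#S : ℝ)) • ∑ k ∈ S, x k) - a +
        ⟪u, (1 / (#S : ℝ)) • ∑ k ∈ S, x k - (1 / (#S : ℝ)) • ∑ k ∈ S, p k⟫ ≤
      1 / (#S : ℝ) * ∑ k ∈ S, (f (x k) - a + ⟪u, x k - p k⟫) := by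
  have hcard : (#S : ℝ) ≠ 0 := Nat.cast_ne_zero.2 hS.card_ne_zero
  rw [← smul_sub, ← sum_sub_distrib, real_inner_smul_right, inner_sum, sum_add_distrib,
    sum_sub_distrib, sum_const, nsmul_eq_mul, mul_add, mul_sub, ← mul_assoc,
    one_div_mul_cancel hcard, one_mul]
  gcongr
  exact map_average_le_of_convexOn hf hS fun k _ => Set.mem_univ (x k)

end Gap

section Smooth

variable {E : Type*} [NormedAddCommGroup E] [InnerProductSpace ℝ E] [CompleteSpace E]
  {f : E → ℝ} {x y z : E}

theorem hasDerivAt_comp_lineMap {g : E} {r : ℝ}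
    (hf : HasGradientAt f g (AffineMap.lineMap x y r)) :
    HasDerivAt (fun s : ℝ => f (AffineMap.lineMap x y s)) ⟪g, y - x⟫ r :=
  hf.hasFDerivAt.comp_hasDerivAt r AffineMap.hasDerivAt_lineMap

theorem add_inner_le_of_convexOn {S : Set E} (hf : ConvexOn ℝ S f) {g : E}
    (hg : HasGradientAt f g x) (hx : x ∈ S) (hz : z ∈ S) : f x + ⟪g, z - x⟫ ≤ f z := by
  have hderiv : HasDerivAt (fun s : ℝ => f (AffineMap.lineMap x z s)) ⟪g, z - x⟫ 0 :=
    hasDerivAt_comp_lineMap (by rwa [AffineMap.lineMap_apply_zero])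
  have hslope := (hf.comp_affineMap (AffineMap.lineMap x z)).le_slope_of_hasDerivAt
    (by simpa using hx) (by simpa using hz) one_pos hderiv
  simp only [slope_def_field, Function.comp_apply, AffineMap.lineMap_apply_one,
    AffineMap.lineMap_apply_zero, sub_zero, div_one] at hslope
  linarith

theorem le_add_inner_add_sq_of_lipschitz_gradient {f' : E → E} {L : ℝ}
    (hf : ∀ v ∈ segment ℝ x y, HasGradientAt f (f' v) v)
    (hlip : ∀ v ∈ segment ℝ x y, ‖f' v - f' x‖ ≤ L * ‖v - x‖) :
    f y ≤ f x + ⟪f' x, y - x⟫ + L / 2 * ‖y - x‖ ^ 2 := by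
  let p : ℝ → E := AffineMap.lineMap x y
  have hp : ∀ r ∈ Set.Icc (0 : ℝ) 1, p r ∈ segment ℝ x y := fun r hr =>
    segment_eq_image_lineMap ℝ x y ▸ Set.mem_image_of_mem _ hr
  have hderiv : ∀ r ∈ Set.Icc (0 : ℝ) 1, HasDerivAt (fun s => f (p s)) ⟪f' (p r), y - x⟫ r :=
    fun r hr => hasDerivAt_comp_lineMap (hf _ (hp r hr))
  have hbound : ∀ r, HasDerivAt
      (fun s : ℝ => f x + s * ⟪f' x, y - x⟫ + L / 2 * ‖y - x‖ ^ 2 * s ^ 2)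
      (⟪f' x, y - x⟫ + L * r * ‖y - x‖ ^ 2) r := fun r => by
    refine ((((hasDerivAt_id r).mul_const _).const_add _).add
      ((hasDerivAt_pow 2 r).const_mul _)).congr_deriv ?_
    push_cast
    ring
  have hslope : ∀ r ∈ Set.Ico (0 : ℝ) 1,
      ⟪f' (p r), y - x⟫ ≤ ⟪f' x, y - x⟫ + L * r * ‖y - x‖ ^ 2 := fun r hr => by
    have hgrad : ‖f' (p r) - f' x‖ ≤ L * r * ‖y - x‖ := by
      have hdist : ‖p r - x‖ = r * ‖y - x‖ := by
        rw [← vsub_eq_sub, AffineMap.lineMap_vsub_left, vsub_eq_sub, norm_smul,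
          Real.norm_of_nonneg hr.1]
      simpa only [hdist, mul_assoc] using hlip _ (hp r (Set.Ico_subset_Icc_self hr))
    rw [← sub_le_iff_le_add', ← inner_sub_left, sq, ← mul_assoc]
    exact (real_inner_le_norm _ _).trans (by gcongr)
  simpa [p] using image_le_of_deriv_right_le_deriv_boundary
    (fun r hr => (hderiv r hr).continuousAt.continuousWithinAt)
    (fun r hr => (hderiv r (Set.Ico_subset_Icc_self hr)).hasDerivWithinAt) (by simp [p])
    (fun r _ => (hbound r).continuousAt.continuousWithinAt)
    (fun r _ => (hbound r).hasDerivWithinAt) hslope (Set.right_mem_Icc.2 zero_le_one)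

theorem sub_le_inner_add_sq_of_convexOn_of_lipschitz_gradient (hconv : ConvexOn ℝ Set.univ f)
    {f' : E → E} {L : ℝ} (hf : ∀ v, HasGradientAt f (f' v) v)
    (hlip : ∀ u v, ‖f' u - f' v‖ ≤ L * ‖u - v‖) (x y z : E) :
    f y - f z ≤ ⟪f' x, y - z⟫ + L / 2 * ‖y - x‖ ^ 2 := by
  have hlower := add_inner_le_of_convexOn hconv (hf x) (Set.mem_univ x) (Set.mem_univ z)
  have hupper : f y ≤ f x + ⟪f' x, y - x⟫ + L / 2 * ‖y - x‖ ^ 2 :=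
    le_add_inner_add_sq_of_lipschitz_gradient (fun v _ => hf v) fun v _ => hlip v x
  rw [← sub_sub_sub_cancel_right y z x, inner_sub_right]
  linarith

end Smooth

section Round

variable {E : Type*} [NormedAddCommGroup E] [InnerProductSpace ℝ E]

/-- The error that the noise `ξ` contributes to the bound of a single round with step size `η`,
where `v` is the vector from the previous local iterate to the comparator. -/
noncomputable def noiseError (ρ L η : ℝ) (ξ v : E) : ℝ :=
  (ρ + 1 / η) ^ 2 / (2 * (1 / η - L)) * ‖ξ‖ ^ 2 - (ρ + 1 / η) * ⟪ξ, v⟫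

theorem proximal_add_noise_le {ρ L η : ℝ} (hη : L < 1 / η) (x y s ξ : E) :
    (ρ + 1 / η) * ⟪ξ, y - s⟫ - 1 / η * ⟪y - x, y - s⟫ + L / 2 * ‖y - x‖ ^ 2 ≤
      noiseError ρ L η ξ (s - x) + 1 / (2 * η) * (‖s - x‖ ^ 2 - ‖s - y‖ ^ 2) := by
  have hyoung := real_inner_le_young (sub_pos.2 hη) ((ρ + 1 / η) • ξ) (y - x)
  rw [real_inner_smul_left, norm_smul, mul_pow, Real.norm_eq_abs, sq_abs,
    mul_div_right_comm] at hyoung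
  have hprox : ⟪y - x, y - s⟫ = -((‖s - x‖ ^ 2 - ‖s - y‖ ^ 2 - ‖y - x‖ ^ 2) / 2) := by
    rw [← neg_sub s y, inner_neg_right, real_inner_comm, inner_sub_sub_eq_norm_sq]
  have hnoise : ⟪ξ, y - s⟫ = ⟪ξ, y - x⟫ - ⟪ξ, s - x⟫ := by
    rw [← inner_sub_right, sub_sub_sub_cancel_right]
  rw [hprox, hnoise, noiseError, mul_comm 2 η, ← div_div 1 η 2]
  linarith

theorem two_mul_inner_consensus_le (p q y s : E) :
    2 * ⟪p - q, y - s⟫ ≤ ‖s - p‖ ^ 2 - ‖s - q‖ ^ 2 + ‖y - q‖ ^ 2 := by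
  have hyoung := real_inner_le_young one_pos (p - q) (y - q)
  rw [← sub_add_sub_cancel y q s, inner_add_right, inner_sub_sub_eq_norm_sq, norm_sub_rev s p,
    norm_sub_rev s q]
  linarith

theorem inner_dual_eq {ρ : ℝ} (hρ : ρ ≠ 0) (v d : E) :
    ⟪v, d⟫ = 1 / (2 * ρ) * (‖v + ρ • d‖ ^ 2 - ‖v‖ ^ 2) - ρ / 2 * ‖d‖ ^ 2 := by
  rw [norm_add_sq_real, real_inner_smul_right, norm_smul, mul_pow, Real.norm_eq_abs, sq_abs]
  field_simp
  ring

end Round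

/-- The iterates of `t` rounds of DP-ADMM with step sizes `η` and penalty `ρ`: `wt i`, `γ i` and
`ξ i` are the local model, the dual variable and the privacy noise of agent `i`, and `w` is the
global model. The rounds are numbered from `1`, as in the paper. The update directions `g i` are
arbitrary vector fields, so that the algebra of the recursion does not depend on their being
gradients. -/
structure IsDPADMMRun {ι E : Type*} [Fintype ι] [AddCommGroup E] [Module ℝ E] (ρ : ℝ) (t : ℕ)
    (g : ι → E → E) (η : ι → ℕ → ℝ) (wt : ι → ℕ → E) (w : ℕ → E) (γ ξ : ι → ℕ → E) : Prop where
  primal : ∀ i k, 1 ≤ k → k ≤ t →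
    wt i k = (ρ + 1 / η i k)⁻¹ •
      (-(g i (wt i (k - 1))) + γ i (k - 1) + ρ • w (k - 1) + (1 / η i k) • wt i (k - 1)) + ξ i k
  consensus : ∀ k, 1 ≤ k → k ≤ t →
    w k = (1 / (Fintype.card ι : ℝ)) • ∑ i, wt i k -
      (1 / ((Fintype.card ι : ℝ) * ρ)) • ∑ i, γ i (k - 1)
  dual : ∀ i k, 1 ≤ k → k ≤ t → γ i k = γ i (k - 1) - ρ • (wt i k - w k)
  dual_zero : ∀ i, γ i 0 = 0

namespace IsDPADMMRun

section Algebra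

variable {ι E : Type*} [Fintype ι] [AddCommGroup E] [Module ℝ E] {ρ : ℝ} {t : ℕ} {g : ι → E → E}
  {η : ι → ℕ → ℝ} {wt : ι → ℕ → E} {w : ℕ → E} {γ ξ : ι → ℕ → E}

theorem direction_eq (h : IsDPADMMRun ρ t g η wt w γ ξ) {i : ι} {k : ℕ} (hk : 1 ≤ k) (hkt : k ≤ t)
    (hη : ρ + 1 / η i k ≠ 0) :
    g i (wt i (k - 1)) = γ i k + ρ • (w (k - 1) - w k) - (1 / η i k) • (wt i k - wt i (k - 1)) +
      (ρ + 1 / η i k) • ξ i k := by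
  have hprimal := congrArg ((ρ + 1 / η i k) • ·) (sub_eq_of_eq_add (h.primal i k hk hkt))
  simp only [smul_inv_smul₀ hη] at hprimal
  have hdir : g i (wt i (k - 1)) = γ i (k - 1) + ρ • w (k - 1) + (1 / η i k) • wt i (k - 1) -
      (ρ + 1 / η i k) • (wt i k - ξ i k) := by
    rw [hprimal]
    abel
  rw [hdir, h.dual i k hk hkt]
  module

theorem sum_dual_eq_zero [Nonempty ι] (h : IsDPADMMRun ρ t g η wt w γ ξ) (hρ : ρ ≠ 0) {k : ℕ}
    (hkt : k ≤ t) : ∑ i, γ i k = 0 := by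
  rcases k.eq_zero_or_pos with rfl | hk
  · simp only [h.dual_zero, sum_const_zero]
  have hcard : (Fintype.card ι : ℝ) ≠ 0 := Nat.cast_ne_zero.2 Fintype.card_ne_zero
  have hconsensus : (ρ * Fintype.card ι) • w k = ρ • ∑ i, wt i k - ∑ i, γ i (k - 1) := by
    rw [h.consensus k hk hkt, smul_sub, smul_smul, smul_smul, mul_assoc,
      mul_one_div_cancel hcard, mul_one, mul_comm ρ, mul_one_div_cancel (mul_ne_zero hcard hρ),
      one_smul]
  calc ∑ i, γ i k = ∑ i, (γ i (k - 1) - ρ • (wt i k - w k)) :=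
        sum_congr rfl fun i _ => h.dual i k hk hkt
    _ = ∑ i, γ i (k - 1) - ρ • ∑ i, wt i k + (ρ * Fintype.card ι) • w k := by
        rw [sum_sub_distrib, ← smul_sum, sum_sub_distrib, sum_const, card_univ,
          ← Nat.cast_smul_eq_nsmul ℝ, smul_sub, smul_smul, sub_sub_eq_add_sub, sub_add_eq_add_sub]
    _ = 0 := by
        rw [hconsensus]
        abel

end Algebra

section Convergence

variable {ι E : Type*} [Fintype ι] [NormedAddCommGroup E] [InnerProductSpace ℝ E] {ρ L : ℝ} {t : ℕ}
  {g : ι → E → E} {η : ι → ℕ → ℝ} {wt : ι → ℕ → E} {w : ℕ → E} {γ ξ : ι → ℕ → E} {i : ι}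

theorem inner_direction_le (h : IsDPADMMRun ρ t g η wt w γ ξ) (hρ : 0 < ρ) {k : ℕ} (hk : 1 ≤ k)
    (hkt : k ≤ t) (hη : 0 < η i k) (hηL : L < 1 / η i k) (s u : E) :
    ⟪g i (wt i (k - 1)), wt i k - s⟫ + L / 2 * ‖wt i k - wt i (k - 1)‖ ^ 2 +
        ⟪u, wt i k - w k⟫ ≤
      noiseError ρ L (η i k) (ξ i k) (s - wt i (k - 1)) +
        1 / (2 * η i k) * (‖s - wt i (k - 1)‖ ^ 2 - ‖s - wt i k‖ ^ 2) +
        1 / (2 * ρ) * (‖γ i (k - 1) + u‖ ^ 2 - ‖γ i k + u‖ ^ 2) +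
        ρ / 2 * (‖s - w (k - 1)‖ ^ 2 - ‖s - w k‖ ^ 2) + ⟪γ i k, w k - s⟫ := by
  have hprox := proximal_add_noise_le (ρ := ρ) hηL (wt i (k - 1)) (wt i k) s (ξ i k)
  have hconsensus := mul_le_mul_of_nonneg_left
    (two_mul_inner_consensus_le (w (k - 1)) (w k) (wt i k) s) (half_pos hρ).le
  have hdual := inner_dual_eq hρ.ne' (γ i k + u) (wt i k - w k)
  have hprev : γ i k + u + ρ • (wt i k - w k) = γ i (k - 1) + u := by
    rw [h.dual i k hk hkt]
    abel
  have hsplit : ⟪γ i k, wt i k - s⟫ = ⟪γ i k, wt i k - w k⟫ + ⟪γ i k, w k - s⟫ := by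
    rw [← inner_add_right, sub_add_sub_cancel]
  rw [hprev, inner_add_left] at hdual
  rw [h.direction_eq hk hkt (by positivity), inner_add_left, inner_sub_left, inner_add_left,
    real_inner_smul_left, real_inner_smul_left, real_inner_smul_left, hsplit]
  linarith

theorem sum_inner_direction_le (h : IsDPADMMRun ρ t g η wt w γ ξ) (hρ : 0 < ρ) (ht : 1 ≤ t)
    (hη : ∀ k, 1 ≤ k → k ≤ t → 0 < η i k) (hηmono : ∀ k, 1 ≤ k → k < t → η i (k + 1) ≤ η i k)
    (hηL : ∀ k, 1 ≤ k → k ≤ t → L < 1 / η i k) {s : E} {c c_w : ℝ}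
    (hc : ∀ k < t, ‖s - wt i k‖ ≤ c) (hcw : ‖s - w 0‖ ≤ c_w) (u : E) :
    ∑ k ∈ Icc 1 t, (⟪g i (wt i (k - 1)), wt i k - s⟫ +
        L / 2 * ‖wt i k - wt i (k - 1)‖ ^ 2 + ⟪u, wt i k - w k⟫) ≤
      ∑ k ∈ Icc 1 t, noiseError ρ L (η i k) (ξ i k) (s - wt i (k - 1)) + c ^ 2 / (2 * η i t) +
        ‖u‖ ^ 2 / (2 * ρ) + ρ / 2 * c_w ^ 2 + ∑ k ∈ Icc 1 t, ⟪γ i k, w k - s⟫ := by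
  have hprox : ∑ k ∈ Icc 1 t,
      1 / (2 * η i k) * (‖s - wt i (k - 1)‖ ^ 2 - ‖s - wt i k‖ ^ 2) ≤ c ^ 2 / (2 * η i t) :=
    sum_Icc_one_div_mul_pred_sub_le (D := fun k => ‖s - wt i k‖ ^ 2) ht hη hηmono
      (fun k hkt => pow_le_pow_left₀ (norm_nonneg _) (hc k hkt) 2) (sq_nonneg _)
  have hdual : 1 / (2 * ρ) * (‖γ i 0 + u‖ ^ 2 - ‖γ i t + u‖ ^ 2) ≤ ‖u‖ ^ 2 / (2 * ρ) := by
    rw [h.dual_zero, zero_add, one_div_mul_eq_div]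
    gcongr
    exact sub_le_self _ (sq_nonneg _)
  have hconsensus : ρ / 2 * (‖s - w 0‖ ^ 2 - ‖s - w t‖ ^ 2) ≤ ρ / 2 * c_w ^ 2 := by
    gcongr
    exact (sub_le_self _ (sq_nonneg _)).trans (pow_le_pow_left₀ (norm_nonneg _) hcw 2)
  refine (sum_le_sum fun k hk =>
    have ⟨hk₁, hkt⟩ := mem_Icc.1 hk
    h.inner_direction_le hρ hk₁ hkt (hη k hk₁ hkt) (hηL k hk₁ hkt) s u).trans ?_
  simp only [sum_add_distrib, ← mul_sum (Icc 1 t) _ (1 / (2 * ρ)), ← mul_sum (Icc 1 t) _ (ρ / 2)]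
  rw [sum_Icc_one_pred_sub fun k => ‖γ i k + u‖ ^ 2, sum_Icc_one_pred_sub fun k => ‖s - w k‖ ^ 2]
  linarith

theorem sum_sum_inner_dual_eq_zero [Nonempty ι] (h : IsDPADMMRun ρ t g η wt w γ ξ) (hρ : ρ ≠ 0)
    (s : E) : ∑ i, ∑ k ∈ Icc 1 t, ⟪γ i k, w k - s⟫ = 0 := by
  rw [sum_comm]
  refine sum_eq_zero fun k hk => ?_
  rw [← sum_inner, h.sum_dual_eq_zero hρ (mem_Icc.1 hk).2, inner_zero_left]

theorem sum_average_gap_add_inner_le [CompleteSpace E] [Nonempty ι]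
    (h : IsDPADMMRun ρ t g η wt w γ ξ) (hρ : 0 < ρ) (ht : 1 ≤ t) {f : ι → E → ℝ}
    (hf : ∀ i, ConvexOn ℝ Set.univ (f i)) (hgrad : ∀ i x, HasGradientAt (f i) (g i x) x)
    (hlip : ∀ i x y, ‖g i x - g i y‖ ≤ L * ‖x - y‖)
    (hη : ∀ i k, 1 ≤ k → k ≤ t → 0 < η i k)
    (hηmono : ∀ i k, 1 ≤ k → k < t → η i (k + 1) ≤ η i k)
    (hηL : ∀ i k, 1 ≤ k → k ≤ t → L < 1 / η i k) {s : E} {c c_w : ℝ}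
    (hc : ∀ i, ∀ k < t, ‖s - wt i k‖ ≤ c) (hcw : ‖s - w 0‖ ≤ c_w) (u : ι → E) :
    ∑ i, (f i ((1 / (t : ℝ)) • ∑ k ∈ Icc 1 t, wt i k) - f i s +
        ⟪u i, (1 / (t : ℝ)) • ∑ k ∈ Icc 1 t, wt i k - (1 / (t : ℝ)) • ∑ k ∈ Icc 1 t, w k⟫) ≤
      1 / (t : ℝ) * ∑ i, (∑ k ∈ Icc 1 t, noiseError ρ L (η i k) (ξ i k) (s - wt i (k - 1)) +
        c ^ 2 / (2 * η i t) + ‖u i‖ ^ 2 / (2 * ρ) + ρ / 2 * c_w ^ 2) := by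
  have haverage : ∀ i, f i ((1 / (t : ℝ)) • ∑ k ∈ Icc 1 t, wt i k) - f i s +
      ⟪u i, (1 / (t : ℝ)) • ∑ k ∈ Icc 1 t, wt i k - (1 / (t : ℝ)) • ∑ k ∈ Icc 1 t, w k⟫ ≤
      1 / (t : ℝ) * ∑ k ∈ Icc 1 t, (f i (wt i k) - f i s + ⟪u i, wt i k - w k⟫) := fun i => by
    simpa only [Nat.card_Icc, Nat.add_sub_cancel] using
      average_gap_add_inner_le (hf i) (nonempty_Icc.2 ht) (wt i) w (f i s) (u i)
  have hagent : ∀ i, ∑ k ∈ Icc 1 t, (f i (wt i k) - f i s + ⟪u i, wt i k - w k⟫) ≤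
      ∑ k ∈ Icc 1 t, noiseError ρ L (η i k) (ξ i k) (s - wt i (k - 1)) + c ^ 2 / (2 * η i t) +
        ‖u i‖ ^ 2 / (2 * ρ) + ρ / 2 * c_w ^ 2 + ∑ k ∈ Icc 1 t, ⟪γ i k, w k - s⟫ := fun i =>
    (sum_le_sum fun k _ => add_le_add_left
      (sub_le_inner_add_sq_of_convexOn_of_lipschitz_gradient (hf i) (hgrad i) (hlip i)
        (wt i (k - 1)) (wt i k) s) ⟪u i, wt i k - w k⟫).trans
      (h.sum_inner_direction_le hρ ht (hη i) (hηmono i) (hηL i) (hc i) hcw (u i))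
  have hagents := sum_le_sum fun i (_ : i ∈ univ) => hagent i
  rw [sum_add_distrib, h.sum_sum_inner_dual_eq_zero hρ.ne', add_zero] at hagents
  refine (sum_le_sum fun i _ => haverage i).trans ?_
  rw [← mul_sum]
  exact mul_le_mul_of_nonneg_left hagents (by positivity)

end Convergence

end IsDPADMMRun

theorem dp_admm_convergence_smooth_general {ι E : Type*} [Fintype ι] [Nonempty ι]
    [NormedAddCommGroup E] [InnerProductSpace ℝ E] [CompleteSpace E] {t : ℕ} (ht : 1 ≤ t)
    {ρ L : ℝ} (hρ : 0 < ρ) {f : ι → E → ℝ} (hf : ∀ i, ConvexOn ℝ Set.univ (f i)) {g : ι → E → E}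
    (hgrad : ∀ i x, HasGradientAt (f i) (g i x) x)
    (hlip : ∀ i x y, ‖g i x - g i y‖ ≤ L * ‖x - y‖) {η : ι → ℕ → ℝ}
    (hη : ∀ i k, 1 ≤ k → k ≤ t → 0 < η i k)
    (hηmono : ∀ i k, 1 ≤ k → k < t → η i (k + 1) ≤ η i k)
    (hηL : ∀ i k, 1 ≤ k → k ≤ t → L < 1 / η i k)
    {wt : ι → ℕ → E} {w : ℕ → E} {γ ξ : ι → ℕ → E} (h : IsDPADMMRun ρ t g η wt w γ ξ)
    {s : E} {c c_w : ℝ} (hc : ∀ i, ∀ k < t, ‖s - wt i k‖ ≤ c) (hcw : ‖s - w 0‖ ≤ c_w) (β : ℝ) :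
    ∑ i, (f i ((1 / (t : ℝ)) • ∑ k ∈ Icc 1 t, wt i k) - f i s +
        β * ‖(1 / (t : ℝ)) • ∑ k ∈ Icc 1 t, wt i k - (1 / (t : ℝ)) • ∑ k ∈ Icc 1 t, w k‖) ≤
      1 / (t : ℝ) * ∑ i, ∑ k ∈ Icc 1 t, noiseError ρ L (η i k) (ξ i k) (s - wt i (k - 1)) +
        1 / (t : ℝ) * ∑ i, c ^ 2 / (2 * η i t) +
        (Fintype.card ι : ℝ) * ρ * c_w ^ 2 / (2 * (t : ℝ)) +
        (Fintype.card ι : ℝ) * β ^ 2 / (2 * ρ * (t : ℝ)) := by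
  choose u hu_norm hu_inner using fun i => exists_norm_le_inner_eq_mul_norm β
    ((1 / (t : ℝ)) • ∑ k ∈ Icc 1 t, wt i k - (1 / (t : ℝ)) • ∑ k ∈ Icc 1 t, w k)
  have hu_sq : ∑ i, ‖u i‖ ^ 2 / (2 * ρ) ≤ Fintype.card ι * (β ^ 2 / (2 * ρ)) := by
    rw [← nsmul_eq_mul]
    refine sum_le_card_nsmul _ _ _ fun i _ => ?_
    have hsq : ‖u i‖ ^ 2 ≤ β ^ 2 := sq_le_sq.2 ((abs_norm (u i)).trans_le (hu_norm i))
    gcongr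
  simp only [← hu_inner]
  refine (h.sum_average_gap_add_inner_le hρ ht hf hgrad hlip hη hηmono hηL hc hcw u).trans ?_
  simp only [sum_add_distrib, sum_const, card_univ, nsmul_eq_mul]
  calc _ ≤ 1 / (t : ℝ) * (∑ i, ∑ k ∈ Icc 1 t, noiseError ρ L (η i k) (ξ i k) (s - wt i (k - 1)) +
          ∑ i, c ^ 2 / (2 * η i t) + Fintype.card ι * (β ^ 2 / (2 * ρ)) +
          Fintype.card ι * (ρ / 2 * c_w ^ 2)) := by gcongr
    _ = _ := by
        field_simp
        ring

/-- Deterministic (pathwise) form of the convergence bound for DP-ADMM with convex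
smooth objectives (core of Theorem 3). -/
theorem dp_admm_convergence_smooth
    {E : Type*} [NormedAddCommGroup E] [InnerProductSpace ℝ E] [FiniteDimensional ℝ E]
    (n t : ℕ) (hn : 1 ≤ n) (ht : 1 ≤ t) (ρ L : ℝ) (hρ : 0 < ρ) (hL : 0 ≤ L)
    (f : Fin n → E → ℝ) (hf : ∀ i, ConvexOn ℝ Set.univ (f i))
    (hdiff : ∀ i, Differentiable ℝ (f i))
    (hlip : ∀ i, ∀ x y : E, ‖gradient (f i) x - gradient (f i) y‖ ≤ L * ‖x - y‖)
    (η : Fin n → ℕ → ℝ)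
    (hηpos : ∀ i k, 1 ≤ k → k ≤ t → 0 < η i k)
    (hηmono : ∀ i k, 1 ≤ k → k + 1 ≤ t → η i (k + 1) ≤ η i k)
    (hηL : ∀ i k, 1 ≤ k → k ≤ t → L < 1 / η i k)
    (wt : Fin n → ℕ → E) (w : ℕ → E) (γ : Fin n → ℕ → E)
    (ξ : Fin n → ℕ → E)
    (hprimal : ∀ i k, 1 ≤ k → k ≤ t →
      wt i k = (ρ + 1 / η i k)⁻¹ •
        (-(gradient (f i) (wt i (k - 1))) + γ i (k - 1) + ρ • w (k - 1)
          + (1 / η i k) • wt i (k - 1)) + ξ i k)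
    (hglobal : ∀ k, 1 ≤ k → k ≤ t →
      w k = (1 / (n : ℝ)) • ∑ i, wt i k - (1 / ((n : ℝ) * ρ)) • ∑ i, γ i (k - 1))
    (hdual : ∀ i k, 1 ≤ k → k ≤ t → γ i k = γ i (k - 1) - ρ • (wt i k - w k))
    (hγ0 : ∀ i, γ i 0 = 0)
    (wstar : E) (c c_w : ℝ) (hc : 0 ≤ c) (hcw : 0 ≤ c_w)
    (hbound : ∀ i k, k ≤ t - 1 → ‖wstar - wt i k‖ ≤ c)
    (hw0 : ‖wstar - w 0‖ ≤ c_w) :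
    ∀ β : ℝ, 0 ≤ β →
      ∑ i, (f i ((1 / (t : ℝ)) • ∑ k ∈ Finset.Icc 1 t, wt i k) - f i wstar
            + β * ‖(1 / (t : ℝ)) • ∑ k ∈ Finset.Icc 1 t, wt i k
                    - (1 / (t : ℝ)) • ∑ k ∈ Finset.Icc 1 t, w k‖)
      ≤ (1 / (t : ℝ)) * ∑ i, ∑ k ∈ Finset.Icc 1 t,
            ((ρ + 1 / η i k) ^ 2 / (2 * (1 / η i k - L)) * ‖ξ i k‖ ^ 2
              - (ρ + 1 / η i k) * ⟪ξ i k, wstar - wt i (k - 1)⟫)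
        + (1 / (t : ℝ)) * ∑ i, c ^ 2 / (2 * η i t)
        + (n : ℝ) * ρ * c_w ^ 2 / (2 * (t : ℝ))
        + (n : ℝ) * β ^ 2 / (2 * ρ * (t : ℝ)) := by
  have : Nonempty (Fin n) := ⟨⟨0, hn⟩⟩
  intro β _
  simpa only [noiseError, Fintype.card_fin] using dp_admm_convergence_smooth_general ht hρ hf
    (fun i x => (hdiff i x).hasGradientAt) hlip hηpos hηmono hηL
    ⟨hprimal, by simpa only [Fintype.card_fin] using hglobal, hdual, hγ0⟩
    (fun i k hk => hbound i k (by omega)) hw0 β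
end

section
/- Prox-step optimality inequality with a Bregman divergence (Appendix Lemma). Let E be a finite-dimensional real inner product space, let Λ : E → ℝ be convex and differentiable, let h : E → ℝ be differentiable and strictly convex, let s ≥ 0 and y ∈ E, and define the Bregman divergence D(x, z) = h(x) − h(z) − ⟨∇h(z), x − z⟩. If x* minimizes x ↦ Λ(x) + s·D(x, y) over E, then for every x ∈ E: ⟨∇Λ(x*), x* − x⟩ ≤ s·( D(x, y) − D(x, x*) − D(x*, y) ). -/
open scoped RealInnerProductSpace

/-!
The prox objective has derivative `Λ' x⋆ + s (h' x⋆ - h' y)` at the minimizer `x⋆`, so the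
first-order condition reads `Λ' x⋆ (x⋆ - x) ≤ s (h' x⋆ - h' y) (x - x⋆)`. By the three-point
identity the right-hand side is exactly the combination of divergences in the claim.
-/

section NormedSpace

variable {E : Type*} [NormedAddCommGroup E] [NormedSpace ℝ E]

/-- The Bregman divergence of `h`, the gap at `x` between `h` and its affine model at `z`.
The slopes of the models are an explicit field `h'` of functionals, so that subgradients are
allowed at points where `h` is not differentiable. -/
def bregmanDiv (h : E → ℝ) (h' : E → StrongDual ℝ E) (x z : E) : ℝ :=
  h x - h z - h' z (x - z)

theorem bregmanDiv_three_point (h : E → ℝ) (h' : E → StrongDual ℝ E) (x y z : E) :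
    bregmanDiv h h' x y - bregmanDiv h h' x z - bregmanDiv h h' z y =
      (h' z - h' y) (x - z) := by
  simp only [bregmanDiv, sub_apply, map_sub]
  ring

theorem hasFDerivWithinAt_bregmanDiv {h : E → ℝ} {L : StrongDual ℝ E} {C : Set E} {x : E}
    (hh : HasFDerivWithinAt h L C x) (h' : E → StrongDual ℝ E) (y : E) :
    HasFDerivWithinAt (fun z ↦ bregmanDiv h h' z y) (L - h' y) C x :=
  (hh.sub_const (h y)).sub
    ((h' y).hasFDerivAt.comp_hasFDerivWithinAt x ((hasFDerivWithinAt_id x C).sub_const y))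

theorem bregman_prox_optimality_general {Λ h : E → ℝ} {Λ' : StrongDual ℝ E}
    {h' : E → StrongDual ℝ E} {C : Set E} {s : ℝ} {y xstar : E}
    (hC : StarConvex ℝ xstar C) (hΛ : HasFDerivWithinAt Λ Λ' C xstar)
    (hh : HasFDerivWithinAt h (h' xstar) C xstar)
    (hmin : IsLocalMinOn (fun x ↦ Λ x + s * bregmanDiv h h' x y) C xstar)
    {x : E} (hx : x ∈ C) :
    Λ' (xstar - x) ≤
      s * (bregmanDiv h h' x y - bregmanDiv h h' x xstar - bregmanDiv h h' xstar y) := by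
  have hderiv := hΛ.add ((hasFDerivWithinAt_bregmanDiv hh h' y).const_mul s)
  have first_order : 0 ≤ (Λ' + s • (h' xstar - h' y)) (x - xstar) :=
    hmin.hasFDerivWithinAt_nonneg hderiv
      (sub_mem_posTangentConeAt_of_segment_subset (hC.segment_subset hx))
  rw [bregmanDiv_three_point]
  calc
    Λ' (xstar - x) = -Λ' (x - xstar) := by rw [← map_neg, neg_sub]
    _ ≤ s * (h' xstar - h' y) (x - xstar) := neg_le_iff_add_nonneg'.mpr first_order

end NormedSpace

theorem bregmanDiv_fderiv_eq_inner_gradient {E : Type*} [NormedAddCommGroup E]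
    [InnerProductSpace ℝ E] [CompleteSpace E] (h : E → ℝ) (x z : E) :
    bregmanDiv h (fderiv ℝ h) x z = h x - h z - ⟪gradient h z, x - z⟫ := by
  rw [bregmanDiv, inner_gradient_left]

/-- Prox-step optimality inequality with a Bregman divergence (Appendix Lemma). -/
theorem bregman_prox_optimality
    {E : Type*} [NormedAddCommGroup E] [InnerProductSpace ℝ E] [FiniteDimensional ℝ E]
    (Λ h : E → ℝ)
    (hΛconv : ConvexOn ℝ Set.univ Λ) (hΛdiff : Differentiable ℝ Λ)
    (hhdiff : Differentiable ℝ h) (hhsc : StrictConvexOn ℝ Set.univ h)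
    (s : ℝ) (hs : 0 ≤ s) (y : E)
    (D : E → E → ℝ)
    (hD : ∀ x z : E, D x z = h x - h z - ⟪gradient h z, x - z⟫)
    (xstar : E)
    (hmin : ∀ x : E, Λ xstar + s * D xstar y ≤ Λ x + s * D x y) :
    ∀ x : E, ⟪gradient Λ xstar, xstar - x⟫ ≤ s * (D x y - D x xstar - D xstar y) := by
  intro x
  obtain rfl : D = bregmanDiv h (fderiv ℝ h) :=
    funext₂ fun x z ↦ (hD x z).trans (bregmanDiv_fderiv_eq_inner_gradient h x z).symm
  rw [inner_gradient_left]
  exact bregman_prox_optimality_general (starConvex_univ xstar)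
    (hΛdiff xstar).hasFDerivAt.hasFDerivWithinAt (hhdiff xstar).hasFDerivAt.hasFDerivWithinAt
    (.of_forall hmin) (Set.mem_univ x)
end

section
/- Second numerical inequality in the proof of Theorem 1. For every δ with 0 < δ ≤ 1/100 and every ε with 0 < ε ≤ 1, writing L = ln(1.25/δ), one has −(4L − ε)²/(8L) < ln(√(2π)·δ/2). -/
/-!
The two sides are separated by `-L = log (δ / 1.25)`: on the left because
`(4L - ε)² = 8L² + 8L(L - ε) + ε² ≥ 8L²` as soon as `ε ≤ L`, on the right because
`1 / 1.25 < 1 < √(2π) / 2`.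
-/

lemma neg_four_mul_sub_sq_div_le_neg {L ε : ℝ} (hL : 0 < L) (hεL : ε ≤ L) :
    -(4 * L - ε) ^ 2 / (8 * L) ≤ -L := by
  have excess_nonneg : 0 ≤ 8 * L * (L - ε) + ε ^ 2 :=
    add_nonneg (mul_nonneg (by positivity) (sub_nonneg.2 hεL)) (sq_nonneg ε)
  rw [div_le_iff₀ (by positivity)]
  linear_combination excess_nonneg

lemma two_lt_sqrt_two_mul_pi : 2 < Real.sqrt (2 * Real.pi) :=
  Real.lt_sqrt_of_sq_lt (by linarith [Real.pi_gt_three])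

lemma neg_log_div_lt_log_sqrt_two_mul_pi_mul_div_two {δ : ℝ} (hδ : 0 < δ) :
    -Real.log (1.25 / δ) < Real.log (Real.sqrt (2 * Real.pi) * δ / 2) := by
  rw [← Real.log_inv, inv_div]
  refine Real.log_lt_log (by positivity) ?_
  calc δ / 1.25 < δ := div_lt_self hδ (by norm_num)
    _ = 2 * δ / 2 := by ring
    _ < Real.sqrt (2 * Real.pi) * δ / 2 := by gcongr; exact two_lt_sqrt_two_mul_pi

lemma one_lt_log_of_three_le {x : ℝ} (hx : 3 ≤ x) : 1 < Real.log x :=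
  (Real.lt_log_iff_exp_lt (by linarith)).2 (Real.exp_one_lt_three.trans_le hx)

theorem gaussian_tail_exponent_bound_general
    (δ ε : ℝ) (hδ : 0 < δ) (hδ1 : δ < 1.25)
    (L : ℝ) (hL : L = Real.log (1.25 / δ)) (hεL : ε ≤ L) :
    -(4 * L - ε) ^ 2 / (8 * L) < Real.log (Real.sqrt (2 * Real.pi) * δ / 2) := by
  have L_pos : 0 < L := hL ▸ Real.log_pos ((one_lt_div hδ).2 hδ1)
  calc -(4 * L - ε) ^ 2 / (8 * L) ≤ -L := neg_four_mul_sub_sq_div_le_neg L_pos hεL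
    _ = -Real.log (1.25 / δ) := by rw [hL]
    _ < Real.log (Real.sqrt (2 * Real.pi) * δ / 2) :=
      neg_log_div_lt_log_sqrt_two_mul_pi_mul_div_two hδ

/-- Second numerical inequality in the proof of Theorem 1. -/
theorem gaussian_tail_exponent_bound
    (δ ε : ℝ) (hδ : 0 < δ) (hδ1 : δ ≤ 1 / 100) (hε : 0 < ε) (hε1 : ε ≤ 1)
    (L : ℝ) (hL : L = Real.log (1.25 / δ)) :
    -(4 * L - ε) ^ 2 / (8 * L) < Real.log (Real.sqrt (2 * Real.pi) * δ / 2) := by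
  have one_lt_L : 1 < L := hL ▸ one_lt_log_of_three_le ((le_div_iff₀ hδ).2 (by linarith))
  exact gaussian_tail_exponent_bound_general δ ε hδ (by linarith) L hL (hε1.trans one_lt_L.le)
end

section
/- Tail probability bound for the DP-ADMM noise (conclusion of the tail estimate in the proof of Theorem 1). Let ε ∈ (0,1], δ ∈ (0, 1/100], c₁ > 0, ρ > 0, η > 0, and let m be a positive natural number. Write L = ln(1.25/δ), set σ = 2·c₁·√(2L)/(m·ε·(ρ + 1/η)) and r = (4L·c₁/ε − c₁)/(m·(ρ + 1/η)). Then (gaussianReal 0 σ²)({x : x > r}) < δ/2. -/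
open ProbabilityTheory MeasureTheory

/-!
In units of the standard deviation, `r / σ = s - ε / (2 * s)` with `s = √(2 * L)`: neither the
sensitivity nor the scale of the noise matters. The tangent line to the exponent of the density at
`t > 0` bounds the tail by an exponential one, whence the tail beyond `t` is at most `φ t / t`, with
`φ` the standard normal density. For `t = s - ε / (2 * s)`, completing the square gives
`s ^ 2 - ε ≤ t ^ 2`, so `φ t` is at most `exp (ε / 2) / √(2 * π)` times `exp (-L) = δ / 1.25`, and
the remaining numerical factor is controlled by `9 / 8 ≤ t ^ 2`, a consequence of `ε ≤ 1 ≤ L`.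
-/

section GaussianTail

open Real Set

lemma gaussianPDFReal_zero_one (x : ℝ) :
    gaussianPDFReal 0 1 x = (√(2 * π))⁻¹ * exp (-x ^ 2 / 2) := by
  simp only [gaussianPDFReal, NNReal.coe_one, mul_one, sub_zero]

lemma gaussianPDFReal_zero_one_le_mul_exp (t x : ℝ) :
    gaussianPDFReal 0 1 x ≤ gaussianPDFReal 0 1 t * exp (t ^ 2) * exp (-t * x) := by
  simp only [gaussianPDFReal_zero_one, mul_assoc, ← exp_add]
  gcongr
  linarith [sq_nonneg (x - t)]

lemma gaussianReal_Ioi_le_gaussianPDFReal_div {t : ℝ} (ht : 0 < t) :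
    gaussianReal 0 1 (Ioi t) ≤ ENNReal.ofReal (gaussianPDFReal 0 1 t / t) := by
  rw [gaussianReal_apply_eq_integral 0 one_ne_zero]
  refine ENNReal.ofReal_le_ofReal ?_
  have ht' : -t < 0 := neg_lt_zero.mpr ht
  calc ∫ x in Ioi t, gaussianPDFReal 0 1 x
      ≤ ∫ x in Ioi t, gaussianPDFReal 0 1 t * exp (t ^ 2) * exp (-t * x) :=
        setIntegral_mono (integrable_gaussianPDFReal 0 1).integrableOn
          ((integrableOn_exp_mul_Ioi ht' t).const_mul _) (gaussianPDFReal_zero_one_le_mul_exp t)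
    _ = gaussianPDFReal 0 1 t * (exp (t ^ 2) * exp (-t * t)) / t := by
        rw [integral_const_mul, integral_exp_mul_Ioi ht', neg_div_neg_eq, mul_div_assoc, mul_assoc,
          mul_div_assoc]
    _ = gaussianPDFReal 0 1 t / t := by
        rw [← exp_add, show t ^ 2 + -t * t = 0 by ring, exp_zero, mul_one]

lemma gaussianReal_const_mul_Ioi (μ : ℝ) (v : NNReal) {c : ℝ} (hc : 0 < c) (t : ℝ) :
    gaussianReal (c * μ) (.mk (c ^ 2) (sq_nonneg c) * v) (Ioi (c * t)) =
      gaussianReal μ v (Ioi t) := by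
  rw [← gaussianReal_map_const_mul, Measure.map_apply (measurable_const_mul c) measurableSet_Ioi,
    preimage_const_mul_Ioi₀ _ hc, mul_div_cancel_left₀ _ hc.ne']

end GaussianTail

section GaussianMechanism

open Real Set

variable {ε L : ℝ}

lemma three_fourths_mul_sqrt_le_sqrt_sub_div (hL : 0 < L) (hεL : ε ≤ L) :
    3 / 4 * √(2 * L) ≤ √(2 * L) - ε / (2 * √(2 * L)) := by
  have hs2 : √(2 * L) ^ 2 = 2 * L := sq_sqrt (by positivity)
  have : ε / (2 * √(2 * L)) ≤ √(2 * L) / 4 := by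
    rw [div_le_iff₀ (by positivity)]
    linarith
  linarith

lemma two_mul_sub_le_sq_sqrt_sub_div (hL : 0 < L) :
    2 * L - ε ≤ (√(2 * L) - ε / (2 * √(2 * L))) ^ 2 := by
  calc 2 * L - ε
      ≤ √(2 * L) ^ 2 - ε + (ε / (2 * √(2 * L))) ^ 2 := by
        rw [sq_sqrt (by positivity)]
        exact le_add_of_nonneg_right (sq_nonneg _)
    _ = (√(2 * L) - ε / (2 * √(2 * L))) ^ 2 := by
        field_simp
        ring

lemma exp_half_lt_sqrt_two_pi_mul {t : ℝ} (ht : 0 ≤ t) (ht2 : 9 / 8 ≤ t ^ 2) :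
    exp (1 / 2) < 5 / 8 * (√(2 * π) * t) := by
  refine lt_of_pow_lt_pow_left₀ 2 (by positivity) ?_
  calc exp (1 / 2) ^ 2 = exp 1 := by rw [← exp_nat_mul]; norm_num
    _ < (5 / 8) ^ 2 * (2 * π * (9 / 8)) := by linarith [exp_one_lt_d9, pi_gt_d2]
    _ ≤ (5 / 8) ^ 2 * (2 * π * t ^ 2) := by gcongr
    _ = (5 / 8 * (√(2 * π) * t)) ^ 2 := by
        rw [mul_pow, mul_pow, sq_sqrt (by positivity)]

lemma gaussianReal_Ioi_sqrt_sub_div_lt (hε1 : ε ≤ 1) (hL : 1 ≤ L) :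
    gaussianReal 0 1 (Ioi (√(2 * L) - ε / (2 * √(2 * L)))) < ENNReal.ofReal (5 / 8 * exp (-L)) := by
  have hL0 : 0 < L := by linarith
  have hlower := three_fourths_mul_sqrt_le_sqrt_sub_div hL0 (hε1.trans hL)
  have hsq := two_mul_sub_le_sq_sqrt_sub_div (ε := ε) hL0
  set t := √(2 * L) - ε / (2 * √(2 * L))
  have ht : 0 < t := lt_of_lt_of_le (by positivity) hlower
  have ht2 : 9 / 8 ≤ t ^ 2 := calc
    9 / 8 ≤ (3 / 4) ^ 2 * (2 * L) := by linarith
    _ = (3 / 4 * √(2 * L)) ^ 2 := by rw [mul_pow, sq_sqrt (by positivity)]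
    _ ≤ t ^ 2 := by gcongr
  refine (gaussianReal_Ioi_le_gaussianPDFReal_div ht).trans_lt ?_
  rw [ENNReal.ofReal_lt_ofReal_iff (by positivity)]
  calc gaussianPDFReal 0 1 t / t = exp (-t ^ 2 / 2) / (√(2 * π) * t) := by
        rw [gaussianPDFReal_zero_one]
        field_simp
    _ ≤ exp (1 / 2 + -L) / (√(2 * π) * t) := by
        gcongr
        linarith
    _ = exp (1 / 2) * exp (-L) / (√(2 * π) * t) := by rw [exp_add]
    _ < 5 / 8 * exp (-L) := by
        rw [div_lt_iff₀ (by positivity), mul_right_comm]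
        gcongr
        exact exp_half_lt_sqrt_two_pi_mul ht.le ht2

/- For sensitivity `Δ` and `σ = Δ * √(2 * L) / ε`, the privacy loss at noise `x` is
`(2 * x * Δ + Δ ^ 2) / (2 * σ ^ 2)`, which is at most `ε` exactly when
`x ≤ Δ * (2 * L / ε - 1 / 2)`. -/
lemma gaussianMechanism_tail_lt {Δ : ℝ} (hΔ : 0 < Δ) (hε : 0 < ε) (hε1 : ε ≤ 1) (hL : 1 ≤ L) :
    gaussianReal 0 (.mk ((Δ * √(2 * L) / ε) ^ 2) (sq_nonneg _)) (Ioi (Δ * (2 * L / ε - 1 / 2))) <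
      ENNReal.ofReal (5 / 8 * exp (-L)) := by
  have hs2 : √(2 * L) ^ 2 = 2 * L := sq_sqrt (by positivity)
  have hthreshold : Δ * (2 * L / ε - 1 / 2) =
      Δ * √(2 * L) / ε * (√(2 * L) - ε / (2 * √(2 * L))) := by
    field_simp
    rw [hs2]
    ring
  have hscale := gaussianReal_const_mul_Ioi 0 1 (c := Δ * √(2 * L) / ε) (by positivity)
    (√(2 * L) - ε / (2 * √(2 * L)))
  rw [mul_zero, mul_one] at hscale
  rw [hthreshold, hscale]
  exact gaussianReal_Ioi_sqrt_sub_div_lt hε1 hL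

end GaussianMechanism

theorem dp_admm_noise_tail_bound_general
    (ε δ c₁ ρ η : ℝ) (hε : 0 < ε) (hε1 : ε ≤ 1) (hδ : 0 < δ) (hδ1 : δ ≤ 1.25 / Real.exp 1)
    (hc₁ : 0 < c₁) (hρ : 0 < ρ) (hη : 0 < η) (m : ℕ) (hm : 0 < m)
    (L σ r : ℝ) (hL : L = Real.log (1.25 / δ))
    (hσ : σ = 2 * c₁ * Real.sqrt (2 * L) / ((m : ℝ) * ε * (ρ + 1 / η)))
    (hr : r = (4 * L * c₁ / ε - c₁) / ((m : ℝ) * (ρ + 1 / η))) :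
    gaussianReal 0 ⟨σ ^ 2, sq_nonneg σ⟩ {x : ℝ | x > r} < ENNReal.ofReal (δ / 2) := by
  have hL1 : 1 ≤ L := by
    rwa [hL, Real.le_log_iff_exp_le (by positivity), le_div_comm₀ (Real.exp_pos 1) hδ]
  have hδL : δ / 2 = 5 / 8 * Real.exp (-L) := by
    rw [hL, Real.exp_neg, Real.exp_log (by positivity)]
    field_simp
    norm_num
  have hσΔ : σ = 2 * c₁ / (m * (ρ + 1 / η)) * √(2 * L) / ε := by
    rw [hσ]
    field_simp
  have hrΔ : r = 2 * c₁ / (m * (ρ + 1 / η)) * (2 * L / ε - 1 / 2) := by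
    rw [hr]
    ring
  rw [hδL]
  subst hσΔ hrΔ
  exact gaussianMechanism_tail_lt (by positivity) hε hε1 hL1

/-- Tail probability bound for the DP-ADMM noise (conclusion of the tail estimate
in the proof of Theorem 1). -/
theorem dp_admm_noise_tail_bound
    (ε δ c₁ ρ η : ℝ) (hε : 0 < ε) (hε1 : ε ≤ 1) (hδ : 0 < δ) (hδ1 : δ ≤ 1 / 100)
    (hc₁ : 0 < c₁) (hρ : 0 < ρ) (hη : 0 < η) (m : ℕ) (hm : 0 < m)
    (L σ r : ℝ) (hL : L = Real.log (1.25 / δ))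
    (hσ : σ = 2 * c₁ * Real.sqrt (2 * L) / ((m : ℝ) * ε * (ρ + 1 / η)))
    (hr : r = (4 * L * c₁ / ε - c₁) / ((m : ℝ) * (ρ + 1 / η))) :
    gaussianReal 0 ⟨σ ^ 2, sq_nonneg σ⟩ {x : ℝ | x > r} < ENNReal.ofReal (δ / 2) := by
  have hδ1' : (1 : ℝ) / 100 ≤ 1.25 / Real.exp 1 := by
    rw [le_div_iff₀ (Real.exp_pos 1)]
    linarith [Real.exp_one_lt_three]
  exact dp_admm_noise_tail_bound_general ε δ c₁ ρ η hε hε1 hδ (hδ1.trans hδ1') hc₁ hρ hη m hm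
    L σ r hL hσ hr
end
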